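/- arXiv:2504.15142 — 3 statements merged into one kernel-verified Lean document; each statement's English description precedes it below -/
import Mathlib

section
/- Let n > 1 be an odd integer. There exists a positive integer s such that a (K_2,K_{1,n})-URD(v;1,s) exists if and only if v ≡ 2(n+1) (mod n(n+1)). -/
/-- The edge set of the star with center `p.1` and leaf set `p.2`. -/
def starEdgeSet {V : Type*} [DecidableEq V] (p : V × Finset V) : Finset (Sym2 V) :=
  p.2.image (fun l => s(p.1, l))

/-- `P` is a family of vertex-disjoint `n`-stars (each given by a center and a set of
`n` leaves) whose vertex sets partition the whole vertex set. -/
def IsStarFactorFamily {V : Type*} [Fintype V] [DecidableEq V] (n : ℕ)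
    (P : Finset (V × Finset V)) : Prop :=
  (∀ p ∈ P, p.2.card = n ∧ p.1 ∉ p.2) ∧
  (∀ x : V, ∃! p, p ∈ P ∧ (x = p.1 ∨ x ∈ p.2))

/-- `E` is the edge set of a `K_{1,n}`-factor of the complete graph on `V`. -/
def IsStarFactor {V : Type*} [Fintype V] [DecidableEq V] (n : ℕ)
    (E : Finset (Sym2 V)) : Prop :=
  ∃ P : Finset (V × Finset V), IsStarFactorFamily n P ∧ E = P.biUnion starEdgeSet

/-- `E` is the edge set of a perfect matching (a `1`-factor, i.e. a `K_2`-factor). -/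
def IsOneFactor {V : Type*} [Fintype V] [DecidableEq V] (E : Finset (Sym2 V)) : Prop :=
  (∀ e ∈ E, ¬ e.IsDiag) ∧ ∀ x : V, ∃! e, e ∈ E ∧ x ∈ e

/-- A `(K_2, K_{1,n})`-URD`(v; r, s)`: a partition of the edge set of the complete graph
`K_v` into `r` classes that are `1`-factors and `s` classes that are `K_{1,n}`-factors. -/
def IsURD (n v r s : ℕ) : Prop :=
  ∃ (M : Fin r → Finset (Sym2 (Fin v))) (F : Fin s → Finset (Sym2 (Fin v))),
    (∀ i, IsOneFactor (M i)) ∧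
    (∀ j, IsStarFactor n (F j)) ∧
    (∀ i j, i ≠ j → Disjoint (M i) (M j)) ∧
    (∀ i j, i ≠ j → Disjoint (F i) (F j)) ∧
    (∀ i j, Disjoint (M i) (F j)) ∧
    (∀ e : Sym2 (Fin v),
      (e ∈ Finset.univ.biUnion M ∪ Finset.univ.biUnion F) ↔ ¬ e.IsDiag)

/-!
Necessity is a double count of edges: a one-factor has `v / 2` edges, a star factor has
`n v / (n + 1)`, and they exhaust the `v (v - 1) / 2` edges of `K_v`, so that
`(n + 1) v = 2 (n + 1) + 2 s n`.

For sufficiency, suppose that a graph is properly coloured with `n + 1` colours and that every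
vertex has exactly `2 q` neighbours in each colour other than its own. The edges between two colours
then form `2 q` perfect matchings by König's theorem; orient `q` of them in each direction. A vertex
together with its out-neighbours in the `i`-th matchings is an `n`-star, and the stars centred at
the vertices of one colour form a star factor. So it is enough to split the complement of a perfect
matching into such graphs.

The vertices are `G × Row`, where `G` has `n + 1` elements and a one-factorization indexed by
`ZMod n`, and there are two plain rows and one row for each block and one-factor, which is twisted
by the involution of that one-factor. Between any two rows one perfect matching is set aside for the
frame: the identity, or the twist for skew rows, which carry the same one-factor on unpaired blocks.
With this choice the frame minus the one-factor is regular for the colouring by twisted points.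

Outside the frame, a relation on the rows is lifted by joining related rows completely except for
that matching. The lift of a `2 q`-regular relation is regular for some colouring if permutations of
the rows turn these matchings into identities. The skew pairs are covered by zigzags of `ZMod m`:
each of them alternates between two sides, so twisting the rows on one side untwists its matchings.
Only the end points of a zigzag need repair, for which the plain rows are used.
-/

section RegularRelations

theorem exists_equiv_of_regular {α β : Type*} [Finite α] [Finite β] {E : α → β → Prop} {d : ℕ}
    (hd : 0 < d) (hα : ∀ x, {y | E x y}.ncard = d) (hβ : ∀ y, {x | E x y}.ncard = d) :
    ∃ m : α ≃ β, ∀ x, E x (m x) := by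
  classical
  have := Fintype.ofFinite α
  have := Fintype.ofFinite β
  have above (x : α) : (Finset.univ.filter (E x)).card = d := by
    rw [← hα x, Set.ncard_eq_toFinset_card', Set.toFinset_ofPred]
  have below (y : β) : (Finset.univ.filter (E · y)).card = d := by
    rw [← hβ y, Set.ncard_eq_toFinset_card', Set.toFinset_ofPred]
  have card_eq : Fintype.card α = Fintype.card β := by
    have h := Finset.card_mul_eq_card_mul (s := .univ) (t := .univ) E
      (fun x _ => above x) (fun y _ => below y)
    exact Nat.eq_of_mul_eq_mul_right hd h
  obtain ⟨m, m_inj, hm⟩ := (Fintype.all_card_le_filter_rel_iff_exists_injective E).1 fun A => by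
    refine Nat.le_of_mul_le_mul_right (Finset.card_mul_le_card_mul E (fun x hx => ?_)
      (fun y _ => ?_)) hd
    · rw [← above x]
      refine Finset.card_le_card fun y hy => ?_
      simp only [Finset.mem_filter, Finset.mem_univ, true_and] at hy
      simpa [Finset.bipartiteAbove] using ⟨⟨x, hx, hy⟩, hy⟩
    · rw [← below y]
      exact Finset.card_le_card (Finset.filter_subset_filter _ (Finset.subset_univ A))
  exact ⟨.ofBijective m ((Fintype.bijective_iff_injective_and_card m).2 ⟨m_inj, card_eq⟩), hm⟩

theorem exists_fin_equiv_of_regular {α β : Type*} [Finite α] [Finite β] (d : ℕ) :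
    ∀ {E : α → β → Prop}, (∀ x, {y | E x y}.ncard = d) → (∀ y, {x | E x y}.ncard = d) →
      ∃ m : Fin d → α ≃ β, (∀ i x, E x (m i x)) ∧ ∀ x y, E x y → ∃! i, m i x = y := by
  induction d with
  | zero =>
    intro E hα _
    refine ⟨Fin.elim0, fun i => i.elim0, fun x y hxy => ?_⟩
    have empty : {y | E x y} = ∅ := (Set.ncard_eq_zero (Set.toFinite _)).1 (hα x)
    exact (empty.subset hxy).elim
  | succ d ih =>
    intro E hα hβ
    obtain ⟨m₀, hm₀⟩ := exists_equiv_of_regular d.succ_pos hα hβ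
    obtain ⟨m, hmE, hm⟩ := ih (E := fun x y => E x y ∧ m₀ x ≠ y)
      (fun x => by
        have : {y | E x y ∧ m₀ x ≠ y} = {y | E x y} \ {m₀ x} := by ext; simp [eq_comm]
        rw [this, Set.ncard_sdiff_singleton_of_mem (s := {y | E x y}) (hm₀ x), hα,
          Nat.add_sub_cancel])
      (fun y => by
        have : {x | E x y ∧ m₀ x ≠ y} = {x | E x y} \ {m₀.symm y} := by
          ext; simp [Equiv.eq_symm_apply]
        have mem : E (m₀.symm y) y := by simpa using hm₀ (m₀.symm y)
        rw [this, Set.ncard_sdiff_singleton_of_mem (s := {x | E x y}) mem, hβ, Nat.add_sub_cancel])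
    refine ⟨Fin.cons m₀ m, Fin.cases hm₀ fun i x => (hmE i x).1, fun x y hxy => ?_⟩
    by_cases h₀ : m₀ x = y
    · refine ⟨0, h₀, Fin.cases (fun _ => rfl) fun i hi => ?_⟩
      exact ((hmE i x).2 (h₀.trans hi.symm)).elim
    · obtain ⟨i, hi, huniq⟩ := hm x y ⟨hxy, h₀⟩
      exact ⟨i.succ, hi, Fin.cases (fun h => (h₀ h).elim) fun j hj => congrArg _ (huniq j hj)⟩

theorem exists_fin_equiv_of_bipartition {α : Type*} [Finite α] {E : α → α → Prop}
    (hE : ∀ x y, E x y → E y x) {A : α → Prop} (hA : ∀ x y, E x y → (A x ↔ ¬ A y)) {d : ℕ}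
    (hreg : ∀ x, {y | E x y}.ncard = d) :
    ∃ m : Fin d → {x // A x} ≃ {y // ¬ A y}, (∀ i (x : {x // A x}), E x (m i x)) ∧
      ∀ (x : {x // A x}) (y : {y // ¬ A y}), E x y → ∃! i, m i x = y := by
  have hE' (x y) : E x y ↔ E y x := ⟨hE x y, hE y x⟩
  refine exists_fin_equiv_of_regular d (E := fun (x : {x // A x}) (y : {y // ¬ A y}) => E x y)
    (fun x => ?_) fun y => ?_
  · rw [← hreg x]
    exact Set.ncard_preimage_of_injective_subset_range (s := {y | E x y})
      Subtype.val_injective fun y hy => ⟨⟨y, (hA x y hy).1 x.2⟩, rfl⟩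
  · rw [← hreg y]
    simp only [hE' _ (y : α)]
    exact Set.ncard_preimage_of_injective_subset_range (s := {x | E y x})
      Subtype.val_injective fun x hx => ⟨⟨x, (hA x y (hE y x hx)).2 y.2⟩, rfl⟩

-- A bipartite form of Petersen's 2-factor theorem: the bipartition `A` replaces the Euler tour.
theorem exists_perm_of_regular {α : Type*} [Finite α] {E : α → α → Prop}
    (hE : ∀ x y, E x y → E y x) {A : α → Prop} (hA : ∀ x y, E x y → (A x ↔ ¬ A y)) {q : ℕ}
    (hreg : ∀ x, {y | E x y}.ncard = 2 * q) :
    ∃ φ : Fin q → Equiv.Perm α, (∀ i x, E x (φ i x)) ∧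
      ∀ x y, E x y → ∃! p : Bool × Fin q, if p.1 then φ p.2 x = y else φ p.2 y = x := by
  classical
  obtain ⟨m, hmE, hm⟩ := exists_fin_equiv_of_bipartition hE hA hreg
  let ι : Bool × Fin q ≃ Fin (2 * q) := Fintype.equivFinOfCardEq (by simp)
  let φ (i : Fin q) : Equiv.Perm α := (Equiv.sumCompl A).symm.trans <|
    ((m (ι (true, i))).sumCongr (m (ι (false, i))).symm).trans <|
      (Equiv.sumComm _ _).trans (Equiv.sumCompl A)
  have φ_pos (i) (x : {x // A x}) : φ i x = m (ι (true, i)) x := by simp [φ, x.2]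
  have φ_neg (i) (y : {y // ¬ A y}) : φ i y = (m (ι (false, i))).symm y := by simp [φ, y.2]
  refine ⟨φ, fun i x => ?_, fun x y hxy => ?_⟩
  · by_cases hx : A x
    · exact φ_pos i ⟨x, hx⟩ ▸ hmE _ ⟨x, hx⟩
    · have := hmE (ι (false, i)) ((m (ι (false, i))).symm ⟨x, hx⟩)
      rw [Equiv.apply_symm_apply] at this
      exact φ_neg i ⟨x, hx⟩ ▸ hE _ _ this
  · by_cases hx : A x
    · lift x to {x // A x} using hx
      lift y to {y // ¬ A y} using (hA x y hxy).1 x.2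
      refine (Equiv.existsUnique_congr ι ?_).2 (hm x y hxy)
      rintro ⟨_ | _, i⟩
      · simp [φ_neg, Subtype.val_inj, Equiv.symm_apply_eq, eq_comm (a := y)]
      · simp [φ_pos, Subtype.val_inj]
    · have hy : A y := (hA y x (hE x y hxy)).2 hx
      lift x to {x // ¬ A x} using hx
      lift y to {y // A y} using hy
      refine (Equiv.existsUnique_congr ((Equiv.prodCongrLeft fun _ => Equiv.boolNot).trans ι)
        ?_).2 (hm y x (hE x y hxy))
      rintro ⟨_ | _, i⟩
      · simp [φ_pos, Subtype.val_inj]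
      · simp [φ_neg, Subtype.val_inj, Equiv.symm_apply_eq, eq_comm (a := x)]

end RegularRelations

section ColorRegular

variable {V W α : Type*}

/-- The proper colouring `γ` gives every vertex exactly `d` neighbours in each colour other than
its own. -/
def IsColorRegular {H : SimpleGraph V} (γ : H.Coloring α) (d : ℕ) : Prop :=
  ∀ x a, a ≠ γ x → {y | H.Adj x y ∧ γ y = a}.ncard = d

theorem IsColorRegular.comap {H : SimpleGraph V} {γ : H.Coloring α} {d : ℕ}
    (hγ : IsColorRegular γ d) (e : W ≃ V) :
    IsColorRegular (γ.comp (SimpleGraph.Iso.comap e H).toHom) d := by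
  intro x a ha
  rw [← hγ (e x) a ha]
  exact Set.ncard_preimage_of_injective_subset_range (s := {y | H.Adj (e x) y ∧ γ y = a})
    e.injective fun y _ => e.surjective y

/-- A port of `γ` is a vertex `x` with a colour other than its own: it stands for the bundle of
edges from `x` to that colour. -/
abbrev Port {H : SimpleGraph V} (γ : H.Coloring α) : Type _ := {p : V × α // p.2 ≠ γ p.1}

/-- Two ports are joined when the edge between their vertices belongs to both bundles. -/
def Port.Joined {H : SimpleGraph V} {γ : H.Coloring α} (p p' : Port γ) : Prop :=
  H.Adj p.1.1 p'.1.1 ∧ γ p'.1.1 = p.1.2 ∧ γ p.1.1 = p'.1.2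

theorem Port.Joined.symm {H : SimpleGraph V} {γ : H.Coloring α} {p p' : Port γ}
    (h : p.Joined p') : p'.Joined p :=
  ⟨h.1.symm, h.2.2, h.2.1⟩

theorem IsColorRegular.ncard_joined {H : SimpleGraph V} {γ : H.Coloring α} {d : ℕ}
    (hγ : IsColorRegular γ d) (p : Port γ) : {p' | p.Joined p'}.ncard = d := by
  have inj : Set.InjOn (fun p' : Port γ => p'.1.1) {p' | p.Joined p'} :=
    fun p₁ h₁ p₂ h₂ h => Subtype.ext (Prod.ext h (h₁.2.2.symm.trans h₂.2.2))
  rw [← hγ p.1.1 p.1.2 p.2, ← inj.ncard_image]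
  congr 1
  ext y
  refine ⟨?_, fun ⟨hxy, hy⟩ => ⟨⟨(y, γ p.1.1), γ.valid hxy⟩, ⟨hxy, hy, rfl⟩, rfl⟩⟩
  rintro ⟨p', ⟨hxy, hy, -⟩, rfl⟩
  exact ⟨hxy, hy⟩

theorem IsColorRegular.exists_orientation [Finite V] [Finite α] {H : SimpleGraph V}
    {γ : H.Coloring α} {q : ℕ} (hγ : IsColorRegular γ (2 * q)) :
    ∃ L : Fin q → V → V → Prop,
      (∀ i x y, L i x y → H.Adj x y) ∧
      (∀ x y, H.Adj x y → ∃! p : Bool × Fin q, if p.1 then L p.2 x y else L p.2 y x) ∧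
      (∀ i x b, b ≠ γ x → ∃! y, L i x y ∧ γ y = b) ∧
      (∀ i y a, a ≠ γ y → ∃! x, L i x y ∧ γ x = a) := by
  obtain ⟨_, -⟩ := exists_wellFoundedLT α
  obtain ⟨φ, hφJ, hφ⟩ := exists_perm_of_regular (E := Port.Joined (γ := γ))
    (fun _ _ => Port.Joined.symm) (A := fun p => γ p.1.1 < p.1.2)
    (fun p p' ⟨_, h₁, h₂⟩ => by rw [← h₁, h₂, not_lt, p'.2.le_iff_lt]) hγ.ncard_joined
  refine ⟨fun i x y => ∃ p : Port γ, p.1.1 = x ∧ (φ i p).1.1 = y, ?_, fun x y hxy => ?_,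
    fun i x b hb => ?_, fun i y a ha => ?_⟩
  · rintro i _ _ ⟨p, rfl, rfl⟩
    exact (hφJ i p).1
  · have port_eq (i) {u w} (huw : γ w ≠ γ u) :
        (∃ p : Port γ, p.1.1 = u ∧ (φ i p).1.1 = w) ↔
          φ i ⟨(u, γ w), huw⟩ = ⟨(w, γ u), huw.symm⟩ := by
      refine ⟨?_, fun h => ⟨⟨(u, γ w), huw⟩, rfl, by rw [h]⟩⟩
      rintro ⟨p, rfl, rfl⟩
      have hp : (⟨(p.1.1, γ (φ i p).1.1), huw⟩ : Port γ) = p :=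
        Subtype.ext (Prod.ext rfl (hφJ i p).2.1)
      exact (congrArg _ hp).trans (Subtype.ext (Prod.ext rfl (hφJ i p).2.2.symm))
    simp only [port_eq _ (γ.valid hxy), port_eq _ (γ.valid hxy.symm)]
    exact hφ _ _ ⟨hxy, rfl, rfl⟩
  · let p : Port γ := ⟨(x, b), hb⟩
    refine ⟨(φ i p).1.1, ⟨⟨p, rfl, rfl⟩, (hφJ i p).2.1⟩, ?_⟩
    rintro _ ⟨⟨p', rfl, rfl⟩, rfl⟩
    have : p' = p := Subtype.ext (Prod.ext rfl (hφJ i p').2.1.symm)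
    rw [this]
  · let p : Port γ := ⟨(y, a), ha⟩
    have hp : ((φ i).symm p).Joined p := by simpa using hφJ i ((φ i).symm p)
    refine ⟨((φ i).symm p).1.1, ⟨⟨_, rfl, by simp [p]⟩, hp.2.2⟩, ?_⟩
    rintro _ ⟨⟨p', rfl, rfl⟩, rfl⟩
    have : φ i p' = p := Subtype.ext (Prod.ext rfl (hφJ i p').2.2.symm)
    rw [← this, Equiv.symm_apply_apply]

theorem isStarFactor_of_relation [Fintype V] [DecidableEq V] {n : ℕ} {C : V → Prop}
    {L : V → V → Prop} (hL : ∀ x y, L x y → C x ∧ ¬ C y)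
    (leaves : ∀ x, C x → {y | L x y}.ncard = n) (center : ∀ y, ¬ C y → ∃! x, L x y)
    {E : Finset (Sym2 V)} (hE : ∀ x y, s(x, y) ∈ E ↔ L x y ∨ L y x) : IsStarFactor n E := by
  classical
  let star (x : V) : V × Finset V := (x, Finset.univ.filter (L x))
  refine ⟨(Finset.univ.filter C).image star, ⟨?_, fun x => ?_⟩, ?_⟩
  · simp only [Finset.forall_mem_image, Finset.mem_filter, Finset.mem_univ, true_and, star]
    intro x hx
    refine ⟨?_, fun h => (hL x x h).2 hx⟩
    rw [← leaves x hx, Set.ncard_eq_toFinset_card', Set.toFinset_ofPred]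
  · by_cases hx : C x
    · refine ⟨star x, ⟨Finset.mem_image_of_mem _ (by simpa), .inl rfl⟩, ?_⟩
      simp only [and_imp, Finset.forall_mem_image]
      rintro c - (rfl | hc)
      · rfl
      · exact ((hL c x (by simpa [star] using hc)).2 hx).elim
    · obtain ⟨c, hc, huniq⟩ := center x hx
      refine ⟨star c, ⟨Finset.mem_image_of_mem _ (by simpa using (hL c x hc).1),
        .inr (by simpa [star])⟩, ?_⟩
      simp only [and_imp, Finset.forall_mem_image, Finset.mem_filter, Finset.mem_univ, true_and]
      rintro c' hc' (rfl | h)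
      · exact (hx hc').elim
      · rw [huniq c' (by simpa [star] using h)]
  · ext e
    induction e with | _ x y
    simp only [hE, starEdgeSet, star, Finset.mem_biUnion, Finset.mem_image, Finset.mem_filter,
      Finset.mem_univ, true_and, exists_exists_and_eq_and, Sym2.eq_iff]
    constructor
    · rintro (h | h)
      · exact ⟨x, (hL x y h).1, y, h, .inl ⟨rfl, rfl⟩⟩
      · exact ⟨y, (hL y x h).1, x, h, .inr ⟨rfl, rfl⟩⟩
    · rintro ⟨c, -, l, h, (⟨rfl, rfl⟩ | ⟨rfl, rfl⟩)⟩
      exacts [.inl h, .inr h]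

theorem ncard_add_one_of_transversal [Finite α] {c : V → α} {R : V → Prop} {a : α}
    (hR : ∀ y, R y → c y ≠ a) (h : ∀ b, b ≠ a → ∃! y, R y ∧ c y = b) :
    {y | R y}.ncard + 1 = Nat.card α := by
  have image_eq : c '' {y | R y} = {a}ᶜ := by
    ext b
    refine ⟨?_, fun hb => (h b hb).exists⟩
    rintro ⟨y, hy, rfl⟩
    exact hR y hy
  have inj : Set.InjOn c {y | R y} := fun y hy y' hy' hyy' =>
    (h (c y) (hR y hy)).unique ⟨hy, rfl⟩ ⟨hy', hyy'.symm⟩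
  rw [← inj.ncard_image, image_eq, ← Set.ncard_singleton a, Set.ncard_compl_add_ncard]

theorem IsColorRegular.exists_isStarFactor [Fintype V] [DecidableEq V] [Fintype α]
    {H : SimpleGraph V} {γ : H.Coloring α} {n q : ℕ} (hα : Fintype.card α = n + 1)
    (hγ : IsColorRegular γ (2 * q)) :
    ∃ F : α × Fin q → Finset (Sym2 V), (∀ t, IsStarFactor n (F t)) ∧
      (∀ t, ∀ e ∈ F t, e ∈ H.edgeSet) ∧ ∀ e ∈ H.edgeSet, ∃! t, e ∈ F t := by
  classical
  obtain ⟨L, hLH, hL, out, into⟩ := hγ.exists_orientation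
  let K (t : α × Fin q) : SimpleGraph V :=
    .fromRel fun x y => γ x = t.1 ∧ L t.2 x y
  have hF (t x y) : s(x, y) ∈ (K t).edgeFinset ↔
      (γ x = t.1 ∧ L t.2 x y) ∨ (γ y = t.1 ∧ L t.2 y x) := by
    simp only [K, SimpleGraph.mem_edgeFinset, SimpleGraph.mem_edgeSet, SimpleGraph.fromRel_adj,
      and_iff_right_iff_imp]
    rintro (⟨-, h⟩ | ⟨-, h⟩)
    exacts [(hLH _ _ _ h).ne, (hLH _ _ _ h).ne']
  refine ⟨fun t => (K t).edgeFinset, fun t => ?_, fun t => ?_, ?_⟩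
  · refine isStarFactor_of_relation (C := fun x => γ x = t.1) (fun x y ⟨hx, h⟩ =>
      ⟨hx, fun hy => γ.valid (hLH _ _ _ h) (hx.trans hy.symm)⟩) (fun x hx => ?_) (fun y hy => ?_)
      (hF t)
    · refine Nat.succ_injective <| (ncard_add_one_of_transversal (c := γ)
        (fun y ⟨_, h⟩ hy => γ.valid (hLH _ _ _ h) (hx.trans hy.symm)) fun b hb => ?_).trans
        (Nat.card_eq_fintype_card.trans hα)
      simpa only [hx, true_and] using out t.2 x b (hx ▸ hb)
    · simpa only [and_comm] using into t.2 y t.1 (Ne.symm hy)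
  · rintro ⟨x, y⟩ h
    rcases (hF t x y).1 h with ⟨-, h⟩ | ⟨-, h⟩
    exacts [hLH _ _ _ h, (hLH _ _ _ h).symm]
  · rintro ⟨x, y⟩ hxy
    obtain ⟨⟨b, i⟩, hi, huniq⟩ := hL x y hxy
    refine ⟨(if b then γ x else γ y, i), (hF _ x y).2 (by cases b <;> simp_all), ?_⟩
    rintro ⟨a, j⟩ h
    rcases (hF _ x y).1 h with ⟨ha, h⟩ | ⟨ha, h⟩
    · obtain ⟨rfl, rfl⟩ := Prod.ext_iff.1 (huniq (true, j) h)
      simpa using ha.symm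
    · obtain ⟨rfl, rfl⟩ := Prod.ext_iff.1 (huniq (false, j) h)
      simpa using ha.symm

end ColorRegular

section Resolution

theorem isOneFactor_edgeFinset {V : Type*} [Fintype V] [DecidableEq V] {M : SimpleGraph V}
    [DecidableRel M.Adj] (hM : ∀ x, ∃! y, M.Adj x y) : IsOneFactor M.edgeFinset := by
  refine ⟨fun e he => M.not_isDiag_of_mem_edgeFinset he, fun x => ?_⟩
  obtain ⟨y, hy, huniq⟩ := hM x
  refine ⟨s(x, y), by simpa using hy, ?_⟩
  rintro e ⟨he, z, rfl⟩
  rw [huniq z (by simpa using he)]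

theorem exists_isStarFactor_of_isColorRegular {V α J : Type*} [Fintype V] [DecidableEq V]
    [Fintype α] [Finite J] {n : ℕ} (hα : Fintype.card α = n + 1) {H : SimpleGraph V}
    {K : J → SimpleGraph V} (hKH : ∀ j, K j ≤ H) (hK : ∀ x y, H.Adj x y → ∃! j, (K j).Adj x y)
    (hcol : ∀ j, ∃ (q : ℕ) (γ : (K j).Coloring α), IsColorRegular γ (2 * q)) :
    ∃ (s : ℕ) (F : Fin s → Finset (Sym2 V)), (∀ t, IsStarFactor n (F t)) ∧
      (∀ t, ∀ e ∈ F t, e ∈ H.edgeSet) ∧ ∀ e ∈ H.edgeSet, ∃! t, e ∈ F t := by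
  choose q γ hγ using hcol
  choose F hF hFK hKF using fun j => (hγ j).exists_isStarFactor hα
  obtain ⟨s, ⟨ι⟩⟩ := Finite.exists_equiv_fin (Σ j, α × Fin (q j))
  refine ⟨s, fun i => F (ι.symm i).1 (ι.symm i).2, fun i => hF _ _,
    fun i e he => SimpleGraph.edgeSet_mono (hKH _) (hFK _ _ e he), ?_⟩
  rintro ⟨x, y⟩ hxy
  obtain ⟨j, hj, hj_unique⟩ := hK x y hxy
  obtain ⟨t, ht, ht_unique⟩ := hKF j s(x, y) hj
  refine (Equiv.existsUnique_congr (q := fun t => s(x, y) ∈ F t.1 t.2) ι.symm fun _ => .rfl).2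
    ⟨⟨j, t⟩, ht, ?_⟩
  rintro ⟨j', t'⟩ ht'
  obtain rfl : j' = j := hj_unique j' (hFK _ _ _ ht')
  exact congrArg _ (ht_unique t' ht')

theorem isURD_of_isStarFactor {n v s : ℕ} {M : SimpleGraph (Fin v)} (hM : ∀ x, ∃! y, M.Adj x y)
    {F : Fin s → Finset (Sym2 (Fin v))} (hF : ∀ t, IsStarFactor n (F t))
    (hFM : ∀ t, ∀ e ∈ F t, e ∈ Mᶜ.edgeSet) (hMF : ∀ e ∈ Mᶜ.edgeSet, ∃! t, e ∈ F t) :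
    IsURD n v 1 s := by
  classical
  refine ⟨fun _ => M.edgeFinset, F, fun _ => isOneFactor_edgeFinset hM, hF,
    fun i j hij => (hij (Subsingleton.elim i j)).elim, fun i j hij => ?_, fun i j => ?_, ?_⟩
  · rw [Finset.disjoint_left]
    exact fun e hi hj => hij ((hMF e (hFM i e hi)).unique hi hj)
  · rw [Finset.disjoint_right]
    rintro ⟨x, y⟩ h
    simpa using (hFM j _ h).2
  · rintro ⟨x, y⟩
    simp only [Finset.mem_union, Finset.mem_biUnion, Finset.mem_univ, true_and,
      Sym2.mk_isDiag_iff]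
    constructor
    · rintro (⟨-, h⟩ | ⟨i, h⟩) rfl
      · simp at h
      · exact (hFM i _ h).1 rfl
    · intro hxy
      by_cases h : M.Adj x y
      · exact .inl ⟨0, by simpa using h⟩
      · exact .inr (hMF s(x, y) ⟨hxy, h⟩).exists

theorem exists_isURD_of_isColorRegular {V α J : Type*} [Fintype V] [Fintype α] [Finite J] {n : ℕ}
    (hα : Fintype.card α = n + 1) {M : SimpleGraph V} (hM : ∀ x, ∃! y, M.Adj x y)
    {K : J → SimpleGraph V} (hKM : ∀ j, K j ≤ Mᶜ)
    (hK : ∀ x y, Mᶜ.Adj x y → ∃! j, (K j).Adj x y)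
    (hcol : ∀ j, ∃ (q : ℕ) (γ : (K j).Coloring α), IsColorRegular γ (2 * q)) :
    ∃ s, IsURD n (Fintype.card V) 1 s := by
  let e : Fin (Fintype.card V) ≃ V := (Fintype.equivFin V).symm
  obtain ⟨s, F, hF, hFM, hMF⟩ := exists_isStarFactor_of_isColorRegular hα (H := (M.comap e)ᶜ)
    (K := fun j => (K j).comap e) (fun j x y h => ⟨h.ne, (hKM j h).2⟩)
    (fun x y h => hK _ _ ⟨e.injective.ne h.1, h.2⟩) fun j => by
      obtain ⟨q, γ, hγ⟩ := hcol j
      exact ⟨q, _, hγ.comap e⟩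
  exact ⟨s, isURD_of_isStarFactor
    (fun x => (Equiv.existsUnique_congr e fun _ => .rfl).2 (hM (e x))) hF hFM hMF⟩

end Resolution

section Necessity

theorem IsStarFactorFamily.eq_of_mem {V : Type*} [Fintype V] [DecidableEq V] {n : ℕ}
    {P : Finset (V × Finset V)} (hP : IsStarFactorFamily n P) {p p' : V × Finset V} (hp : p ∈ P)
    (hp' : p' ∈ P) {x : V} (hx : x ∈ insert p.1 p.2) (hx' : x ∈ insert p'.1 p'.2) : p = p' :=
  (hP.2 x).unique ⟨hp, Finset.mem_insert.1 hx⟩ ⟨hp', Finset.mem_insert.1 hx'⟩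

theorem IsStarFactorFamily.card_mul_eq_card {V : Type*} [Fintype V] [DecidableEq V] {n : ℕ}
    {P : Finset (V × Finset V)} (hP : IsStarFactorFamily n P) :
    P.card * (n + 1) = Fintype.card V := by
  have cover : P.biUnion (fun p => insert p.1 p.2) = Finset.univ := by
    ext x
    obtain ⟨p, ⟨hp, hx⟩, -⟩ := hP.2 x
    simpa using ⟨p.1, p.2, hp, hx⟩
  rw [← Finset.card_univ, ← cover, Finset.card_biUnion fun p hp p' hp' hne =>
    Finset.disjoint_left.2 fun x hx hx' => hne (hP.eq_of_mem hp hp' hx hx')]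
  refine (Finset.sum_const_nat fun p hp => ?_).symm
  rw [Finset.card_insert_of_notMem (hP.1 p hp).2, (hP.1 p hp).1]

theorem card_starEdgeSet {V : Type*} [DecidableEq V] (p : V × Finset V) :
    (starEdgeSet p).card = p.2.card :=
  Finset.card_image_of_injective _ fun _ _ h => Sym2.congr_right.1 h

theorem IsStarFactorFamily.card_biUnion {V : Type*} [Fintype V] [DecidableEq V] {n : ℕ}
    {P : Finset (V × Finset V)} (hP : IsStarFactorFamily n P) :
    (P.biUnion starEdgeSet).card = P.card * n := by
  have mem_star {p : V × Finset V} {e : Sym2 V} (he : e ∈ starEdgeSet p) {x} (hx : x ∈ e) :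
      x ∈ insert p.1 p.2 := by
    obtain ⟨l, hl, rfl⟩ := Finset.mem_image.1 he
    rcases Sym2.mem_iff.1 hx with rfl | rfl
    exacts [Finset.mem_insert_self _ _, Finset.mem_insert_of_mem hl]
  rw [Finset.card_biUnion fun p hp p' hp' hne => Finset.disjoint_left.2 fun e he he' =>
    hne (hP.eq_of_mem hp hp' (mem_star he e.out_fst_mem) (mem_star he' e.out_fst_mem))]
  exact Finset.sum_const_nat fun p hp => (card_starEdgeSet p).trans (hP.1 p hp).1

theorem IsStarFactor.succ_dvd_card {V : Type*} [Fintype V] [DecidableEq V] {n : ℕ}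
    {E : Finset (Sym2 V)} (h : IsStarFactor n E) : n + 1 ∣ Fintype.card V := by
  obtain ⟨P, hP, -⟩ := h
  exact Dvd.intro_left _ hP.card_mul_eq_card

theorem IsStarFactor.card_mul_succ {V : Type*} [Fintype V] [DecidableEq V] {n : ℕ}
    {E : Finset (Sym2 V)} (h : IsStarFactor n E) : E.card * (n + 1) = n * Fintype.card V := by
  obtain ⟨P, hP, rfl⟩ := h
  rw [hP.card_biUnion, ← hP.card_mul_eq_card]
  ring

theorem IsOneFactor.card_mul_two {V : Type*} [Fintype V] [DecidableEq V] {E : Finset (Sym2 V)}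
    (h : IsOneFactor E) : E.card * 2 = Fintype.card V := by
  have cover : E.biUnion Sym2.toFinset = Finset.univ := by
    ext x
    simpa using (h.2 x).exists
  rw [← Finset.card_univ, ← cover, Finset.card_biUnion fun e he e' he' hne =>
    Finset.disjoint_left.2 fun x hx hx' => hne <| (h.2 x).unique
      ⟨he, Sym2.mem_toFinset.1 hx⟩ ⟨he', Sym2.mem_toFinset.1 hx'⟩]
  exact (Finset.sum_const_nat fun e he => Sym2.card_toFinset_of_not_isDiag e (h.1 e he)).symm

theorem IsURD.sum_card {n v r s : ℕ} (h : IsURD n v r s) :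
    ∃ (M : Fin r → Finset (Sym2 (Fin v))) (F : Fin s → Finset (Sym2 (Fin v))),
      (∀ i, IsOneFactor (M i)) ∧ (∀ j, IsStarFactor n (F j)) ∧
      ∑ i, (M i).card + ∑ j, (F j).card = v.choose 2 := by
  obtain ⟨M, F, hM, hF, hMM, hFF, hMF, cover⟩ := h
  refine ⟨M, F, hM, hF, ?_⟩
  have edges : Finset.univ.biUnion M ∪ Finset.univ.biUnion F =
      Finset.univ.filter fun e : Sym2 (Fin v) => ¬ e.IsDiag := by
    ext e
    rw [cover]
    simp
  have disj : Disjoint (Finset.univ.biUnion M) (Finset.univ.biUnion F) := by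
    simp only [Finset.disjoint_biUnion_left, Finset.disjoint_biUnion_right]
    exact fun i _ j _ => hMF j i
  rw [← Finset.card_biUnion fun i _ j _ => hMM i j, ← Finset.card_biUnion fun i _ j _ => hFF i j,
    ← Finset.card_union_of_disjoint disj, edges, ← Fintype.card_subtype,
    Sym2.card_subtype_not_diag, Fintype.card_fin]

theorem IsURD.succ_mul_eq {n v r s : ℕ} (hv : 0 < v) (h : IsURD n v r s) :
    (n + 1) * v = (n + 1) * (r + 1) + 2 * s * n := by
  obtain ⟨M, F, hM, hF, hsum⟩ := h.sum_card
  have hMcard : (∑ i, (M i).card) * 2 = r * v := by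
    rw [Finset.sum_mul, Finset.sum_congr rfl fun i _ => (hM i).card_mul_two]
    simp
  have hFcard : (∑ j, (F j).card) * (n + 1) = s * (n * v) := by
    rw [Finset.sum_mul, Finset.sum_congr rfl fun j _ => (hF j).card_mul_succ]
    simp
  obtain ⟨w, rfl⟩ := Nat.exists_eq_add_one.2 hv
  have hchoose : (w + 1).choose 2 * 2 = (w + 1) * w := by
    rw [Nat.choose_two_right, Nat.div_mul_cancel (Nat.even_mul_pred_self _).two_dvd,
      Nat.add_sub_cancel]
  refine Nat.eq_of_mul_eq_mul_left hv ?_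
  linear_combination (n + 1) * hchoose.symm + 2 * (n + 1) * hsum.symm + (n + 1) * hMcard +
    2 * hFcard

theorem IsURD.modEq {n v s : ℕ} (hv : 0 < v) (hs : 0 < s) (h : IsURD n v 1 s) :
    v ≡ 2 * (n + 1) [MOD n * (n + 1)] := by
  have hdvd : n + 1 ∣ v := by
    obtain ⟨-, F, -, hF, -⟩ := h.sum_card
    simpa using (hF ⟨0, hs⟩).succ_dvd_card
  refine (Nat.modEq_and_modEq_iff_modEq_mul (by simp)).1 ⟨?_, ?_⟩
  · refine Nat.ModEq.cancel_left_of_coprime (c := n + 1) (by simp) ?_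
    have : (n + 1) * (2 * (n + 1)) = (n + 1) * 2 + (n + 1) * 2 * n := by ring
    rw [h.succ_mul_eq hv, this]
    simp [Nat.ModEq]
  · exact (Nat.modEq_zero_iff_dvd.2 hdvd).trans (Nat.modEq_zero_iff_dvd.2 ⟨2, by ring⟩).symm

end Necessity

section Lift

variable {G I : Type*}

/-- The lift of the relation `S` on rows to the vertex set `G × I`: the rows `i` and `i'` with
`S i i'` are joined completely except for the perfect matching `ρ i g = ρ i' g'`. A row with
`S i i` becomes a complete graph. -/
def liftGraph (S : I → I → Prop) (hS : ∀ i i', S i i' → S i' i) (ρ : I → Equiv.Perm G) :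
    SimpleGraph (G × I) where
  Adj x y := S x.2 y.2 ∧ ρ x.2 x.1 ≠ ρ y.2 y.1
  symm := ⟨fun _ _ h => ⟨hS _ _ h.1, h.2.symm⟩⟩
  loopless := ⟨fun _ h => h.2 rfl⟩

theorem ncard_color_fiber (ρ : I → Equiv.Perm G) (a : G) (P : G × I → Prop) :
    {y | P y ∧ ρ y.2 y.1 = a}.ncard = {i | P ((ρ i).symm a, i)}.ncard := by
  rw [← Set.ncard_image_of_injective (f := fun i => ((ρ i).symm a, i)) _
    fun i i' h => (Prod.ext_iff.1 h).2]
  congr 1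
  ext ⟨g, i⟩
  constructor
  · rintro ⟨h, rfl⟩
    exact ⟨i, by simpa using h, by simp⟩
  · rintro ⟨i, h, ⟨⟩⟩
    exact ⟨h, by simp⟩

theorem exists_isColorRegular_liftGraph {S : I → I → Prop} {d : ℕ}
    (hS : ∀ i i', S i i' → S i' i) (hd : ∀ i, {i' | S i i'}.ncard = d) (ρ : I → Equiv.Perm G) :
    ∃ γ : (liftGraph S hS ρ).Coloring G, IsColorRegular γ d := by
  refine ⟨.mk (fun x => ρ x.2 x.1) fun h => h.2, fun x a ha => ?_⟩
  refine (ncard_color_fiber ρ a _).trans ?_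
  have ha' : ρ x.2 x.1 ≠ a := Ne.symm ha
  simp [liftGraph, ha', hd]

end Lift

section OneFactorization

/-- A one-factorization of the complete graph on `G`; each one-factor is encoded as the
fixed-point-free involution that exchanges the ends of its edges. -/
structure OneFactorization (G T : Type*) where
  factor : T → Equiv.Perm G
  involutive : ∀ t, Function.Involutive (factor t)
  factor_ne : ∀ t g, factor t g ≠ g
  existsUnique : ∀ g a, a ≠ g → ∃! t, factor t g = a

theorem isUnit_two_of_odd {n : ℕ} (hn : Odd n) : IsUnit (2 : ZMod n) :=
  (ZMod.isUnit_iff_coprime 2 n).2 hn.coprime_two_left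

/-- The reflection `x ↦ t - x` of `ZMod n`, extended to the point at infinity by exchanging that
point with the centre `t / 2`. -/
def reflection (n : ℕ) (t : ZMod n) : Option (ZMod n) → Option (ZMod n)
  | none => some (2⁻¹ * t)
  | some x => if 2 * x = t then none else some (t - x)

theorem exists_oneFactorization {n : ℕ} (hn : Odd n) :
    Nonempty (OneFactorization (Option (ZMod n)) (ZMod n)) := by
  have two_inv (t : ZMod n) : 2 * (2⁻¹ * t) = t := by
    rw [← mul_assoc, ZMod.mul_inv_of_unit _ (isUnit_two_of_odd hn), one_mul]
  have two_cancel {x t : ZMod n} (h : 2 * x = t) : 2⁻¹ * t = x := by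
    rw [← h, ← mul_assoc, ZMod.inv_mul_of_unit _ (isUnit_two_of_odd hn), one_mul]
  have invol (t : ZMod n) : Function.Involutive (reflection n t) := by
    rintro (_ | x)
    · simp [reflection, two_inv]
    · by_cases h : 2 * x = t
      · simp [reflection, h, two_cancel h]
      · have : 2 * (t - x) ≠ t := fun h' => h (by linear_combination -h')
        simp [reflection, h, this]
  refine ⟨⟨fun t => (invol t).toPerm, invol, ?_, ?_⟩⟩
  · rintro t (_ | x)
    · simp [reflection]
    · by_cases h : 2 * x = t
      · simp [reflection, h]
      · have : t - x ≠ x := fun h' => h (by linear_combination -h')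
        simp [reflection, h, this]
  · rintro (_ | x) (_ | y) hne
    · exact (hne rfl).elim
    · refine ⟨2 * y, by simp [reflection, two_cancel rfl], fun t ht => ?_⟩
      obtain rfl : 2⁻¹ * t = y := by simpa [reflection] using ht
      exact (two_inv t).symm
    · refine ⟨2 * x, by simp [reflection], fun t ht => ?_⟩
      by_contra h
      simp [reflection, Ne.symm h] at ht
    · have hxy : y ≠ x := fun h => hne (congrArg some h)
      have : 2 * x ≠ x + y := fun h => hxy (by linear_combination -h)
      refine ⟨x + y, by simp [reflection, this], fun t ht => ?_⟩
      by_cases h : 2 * x = t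
      · simp [reflection, h] at ht
      · have : t - x = y := by simpa [reflection, h] using ht
        linear_combination this

end OneFactorization

section Frame

variable {G T B : Type*}

/-- The rows of the construction: two plain rows and one row for every block and one-factor. -/
abbrev Row (B T : Type*) : Type _ := Bool ⊕ B × T

/-- The involution attached to a row. -/
def OneFactorization.twist (𝓕 : OneFactorization G T) : Row B T → Equiv.Perm G :=
  Sum.elim (fun _ => 1) fun p => 𝓕.factor p.2

@[simp]
theorem OneFactorization.twist_inl (𝓕 : OneFactorization G T) (e : Bool) :
    𝓕.twist (.inl e : Row B T) = 1 := rfl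

@[simp]
theorem OneFactorization.twist_inr (𝓕 : OneFactorization G T) (p : B × T) :
    𝓕.twist (.inr p) = 𝓕.factor p.2 := rfl

theorem OneFactorization.twist_twist (𝓕 : OneFactorization G T) (i : Row B T) (g : G) :
    𝓕.twist i (𝓕.twist i g) = g := by
  rcases i with _ | p
  exacts [rfl, 𝓕.involutive p.2 g]

theorem OneFactorization.twist_eq_comm (𝓕 : OneFactorization G T) {i : Row B T} {g a : G} :
    𝓕.twist i a = g ↔ 𝓕.twist i g = a :=
  (Function.Involutive.eq_iff fun g => 𝓕.twist_twist i g).trans eq_comm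

theorem OneFactorization.factor_injective (𝓕 : OneFactorization G T) (g : G) :
    Function.Injective fun t => 𝓕.factor t g :=
  fun t _ h => (𝓕.existsUnique g _ (𝓕.factor_ne t g)).unique rfl h.symm

theorem OneFactorization.ncard_twist_eq_self (𝓕 : OneFactorization G T) (g : G) :
    {i : Row B T | 𝓕.twist i g = g}.ncard = 2 := by
  have : {i : Row B T | 𝓕.twist i g = g} = Set.range Sum.inl := by
    ext (_ | p) <;> simp [𝓕.factor_ne]
  rw [this, ← Set.image_univ, Set.ncard_image_of_injective _ Sum.inl_injective, Set.ncard_univ,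
    Nat.card_eq_fintype_card, Fintype.card_bool]

theorem OneFactorization.ncard_twist_eq (𝓕 : OneFactorization G T) {g a : G} (ha : a ≠ g) :
    {i : Row B T | 𝓕.twist i g = a}.ncard = Nat.card B := by
  obtain ⟨t, rfl, -⟩ := 𝓕.existsUnique g a ha
  have : {i : Row B T | 𝓕.twist i g = 𝓕.factor t g} = Set.range fun b => .inr (b, t) := by
    ext (_ | ⟨b, t'⟩)
    · simpa using ha.symm
    · simpa [eq_comm] using (𝓕.factor_injective g).eq_iff
  rw [this, ← Set.image_univ, Set.ncard_image_of_injective _ fun _ _ h => by simpa using h,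
    Set.ncard_univ]

/-- A pairing of the blocks, which may leave a block single when their number is odd. -/
structure Pairing (B : Type*) where
  mate : B → B
  involutive : Function.Involutive mate
  odd_of_fixed : ∀ b, mate b = b → Odd (Nat.card B)

namespace Pairing

variable (P : Pairing B) (𝓕 : OneFactorization G T)

/-- The pairing of rows induced by a pairing of blocks; the two plain rows form a pair. -/
def mateRow : Row B T → Row B T :=
  Sum.map not (Prod.map P.mate id)

/-- Two rows are skew when they carry the same one-factor on different, unpaired blocks. -/
def Skew : Row B T → Row B T → Prop
  | .inr (b, t), .inr (b', t') => t = t' ∧ b' ≠ b ∧ b' ≠ P.mate b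
  | _, _ => False

theorem Skew.symm {P : Pairing B} {i i' : Row B T} (h : P.Skew i i') : P.Skew i' i := by
  rcases i with _ | ⟨b, t⟩ <;> rcases i' with _ | ⟨b', t'⟩ <;> try exact h
  obtain ⟨rfl, hne, hmate⟩ := h
  exact ⟨rfl, hne.symm, fun h => hmate (by rw [h, P.involutive])⟩

theorem Skew.twist_eq {P : Pairing B} {i i' : Row B T} (h : P.Skew i i') :
    𝓕.twist i' = 𝓕.twist i := by
  rcases i with _ | ⟨b, t⟩ <;> rcases i' with _ | ⟨b', t'⟩ <;> try exact h.elim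
  exact congrArg 𝓕.factor h.1.symm

theorem Skew.twist_ne {P : Pairing B} {i i' : Row B T} (h : P.Skew i i') (g : G) :
    𝓕.twist i g ≠ g := by
  rcases i with _ | ⟨b, t⟩
  exacts [h.elim, 𝓕.factor_ne t g]

theorem Skew.ne_mateRow {P : Pairing B} {i i' : Row B T} (h : P.Skew i i') :
    i' ≠ P.mateRow i := by
  rintro rfl
  rcases i with _ | ⟨b, t⟩
  exacts [h, h.2.2 rfl]

theorem Skew.ne {P : Pairing B} {i i' : Row B T} (h : P.Skew i i') : i' ≠ i := by
  rintro rfl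
  rcases i' with _ | ⟨b, t⟩
  exacts [h, h.2.1 rfl]

theorem twist_mateRow (i : Row B T) : 𝓕.twist (P.mateRow i) = 𝓕.twist i := by
  rcases i with _ | ⟨b, t⟩ <;> rfl

theorem skew_of_twist_eq {i i' : Row B T} {g : G} (h : 𝓕.twist i' g = 𝓕.twist i g)
    (hne : i' ≠ i) (hmate : i' ≠ P.mateRow i) : P.Skew i i' := by
  rcases i with e | ⟨b, t⟩ <;> rcases i' with e' | ⟨b', t'⟩
  · cases e <;> cases e' <;> simp [mateRow] at hne hmate
  · exact (𝓕.factor_ne t' g h).elim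
  · exact (𝓕.factor_ne t g h.symm).elim
  · obtain rfl := 𝓕.factor_injective g h
    refine ⟨rfl, fun hb => hne (by rw [hb]), fun hb => hmate ?_⟩
    simp [mateRow, hb]

open Classical in
/-- The matching between two rows that is left to the frame: twisted for skew rows and the
identity otherwise. -/
noncomputable def shift (i i' : Row B T) : Equiv.Perm G :=
  if P.Skew i i' then 𝓕.twist i else 1

theorem shift_comm (i i' : Row B T) : P.shift 𝓕 i' i = P.shift 𝓕 i i' := by
  by_cases h : P.Skew i i'
  · simp [shift, h, h.symm, h.twist_eq]
  · have h' : ¬ P.Skew i' i := fun h' => h h'.symm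
    simp [shift, h, h']

theorem shift_shift (i i' : Row B T) (g : G) : P.shift 𝓕 i i' (P.shift 𝓕 i i' g) = g := by
  by_cases h : P.Skew i i' <;> simp [shift, h, 𝓕.twist_twist]

/-- The part of the complete graph on `G × Row B T` that holds the one-factor: one perfect
matching between any two rows and, if the number of blocks is odd, the rows themselves. -/
def frame : SimpleGraph (G × Row B T) where
  Adj x y := x ≠ y ∧ (x.2 = y.2 ∧ Odd (Nat.card B) ∨ y.1 = P.shift 𝓕 x.2 y.2 x.1)
  symm := ⟨fun x y ⟨hne, h⟩ => ⟨hne.symm, h.imp (And.imp_left Eq.symm) fun h => by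
    rw [h, P.shift_comm, P.shift_shift]⟩⟩
  loopless := ⟨fun _ h => h.1 rfl⟩

open Classical in
/-- The vertex matched with `x`: the same point in the paired row, or the twisted point if the row
of `x` is single. -/
noncomputable def partner (x : G × Row B T) : G × Row B T :=
  if P.mateRow x.2 = x.2 then (𝓕.twist x.2 x.1, x.2) else (x.1, P.mateRow x.2)

theorem mateRow_mateRow (i : Row B T) : P.mateRow (P.mateRow i) = i := by
  rcases i with _ | ⟨b, t⟩
  exacts [by simp [mateRow], by simp [mateRow, P.involutive b]]

theorem partner_partner (x : G × Row B T) : P.partner 𝓕 (P.partner 𝓕 x) = x := by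
  by_cases h : P.mateRow x.2 = x.2
  · simp [partner, h, 𝓕.twist_twist]
  · simp [partner, h, P.mateRow_mateRow, Ne.symm h]

theorem partner_ne (x : G × Row B T) : P.partner 𝓕 x ≠ x := by
  obtain ⟨g, _ | ⟨b, t⟩⟩ := x
  · simp [partner, mateRow]
  · by_cases h : P.mate b = b <;> simp [partner, mateRow, h, 𝓕.factor_ne]

/-- The one-factor of the construction. -/
def matching : SimpleGraph (G × Row B T) where
  Adj x y := P.partner 𝓕 x = y
  symm := ⟨fun x _ h => by rw [← h, P.partner_partner]⟩
  loopless := ⟨P.partner_ne 𝓕⟩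

theorem odd_of_mateRow_eq {i : Row B T} (h : P.mateRow i = i) : Odd (Nat.card B) := by
  rcases i with e | ⟨b, t⟩
  · simp [mateRow] at h
  · exact P.odd_of_fixed b (by simpa [mateRow] using h)

theorem matching_le_frame : P.matching 𝓕 ≤ P.frame (T := T) 𝓕 := by
  rintro ⟨g, i⟩ _ rfl
  refine ⟨(P.partner_ne 𝓕 _).symm, ?_⟩
  by_cases h : P.mateRow i = i
  · exact .inl ⟨by simp [partner, h], P.odd_of_mateRow_eq h⟩
  · have not_skew : ¬ P.Skew i (P.mateRow i) := fun h' => h'.ne_mateRow rfl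
    exact .inr (by simp [partner, h, shift, not_skew])

/-- The frame without the one-factor. -/
def bareFrame : SimpleGraph (G × Row B T) :=
  P.frame 𝓕 \ P.matching 𝓕

theorem bareFrame_adj_self {g g' : G} {i : Row B T} :
    (P.bareFrame 𝓕).Adj (g, i) (g', i) ↔
      Odd (Nat.card B) ∧ g' ≠ g ∧ (P.mateRow i = i → g' ≠ 𝓕.twist i g) := by
  have not_skew : ¬ P.Skew i i := fun h => h.ne rfl
  by_cases h : P.mateRow i = i <;>
    simp only [bareFrame, frame, matching, partner, shift, SimpleGraph.sdiff_adj, ne_eq,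
      Prod.mk.injEq, and_true, true_and, not_skew, h, ↓reduceIte, Equiv.Perm.coe_one, id_eq] <;>
    tauto

variable {P 𝓕} in
theorem Skew.bareFrame_adj_iff {g g' : G} {i i' : Row B T} (h : P.Skew i i') :
    (P.bareFrame 𝓕).Adj (g, i) (g', i') ↔ g' = 𝓕.twist i g := by
  by_cases hi : P.mateRow i = i <;>
    simp [bareFrame, frame, matching, partner, shift, h, h.ne.symm, hi, h.ne_mateRow.symm]

variable {P 𝓕} in
theorem bareFrame_adj_iff_of_not_skew {g g' : G} {i i' : Row B T} (hi : i' ≠ i)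
    (h : ¬ P.Skew i i') : (P.bareFrame 𝓕).Adj (g, i) (g', i') ↔ g' = g ∧ i' ≠ P.mateRow i := by
  by_cases h' : P.mateRow i = i <;>
    simp only [bareFrame, frame, matching, partner, shift, SimpleGraph.sdiff_adj, ne_eq,
      Prod.mk.injEq, hi.symm, h, h', ↓reduceIte, Equiv.Perm.coe_one, id_eq] <;>
    grind

theorem twist_ne_of_bareFrame_adj {x y : G × Row B T} (h : (P.bareFrame 𝓕).Adj x y) :
    𝓕.twist x.2 x.1 ≠ 𝓕.twist y.2 y.1 := by
  obtain ⟨g, i⟩ := x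
  obtain ⟨g', i'⟩ := y
  by_cases hi : i' = i
  · subst hi
    exact ((𝓕.twist i').injective.ne ((P.bareFrame_adj_self 𝓕).1 h).2.1).symm
  by_cases hskew : P.Skew i i'
  · obtain rfl : g' = _ := hskew.bareFrame_adj_iff.1 h
    simpa [hskew.twist_eq, 𝓕.twist_twist] using hskew.twist_ne 𝓕 g
  · obtain ⟨rfl, hmate⟩ := (bareFrame_adj_iff_of_not_skew hi hskew).1 h
    exact fun heq => hskew (P.skew_of_twist_eq 𝓕 heq.symm hi hmate)

theorem bareFrame_adj_twist_of_ne {g a : G} {i : Row B T} (hi : 𝓕.twist i g ≠ a) (hg : a ≠ g)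
    (i' : Row B T) :
    (P.bareFrame 𝓕).Adj (g, i) (𝓕.twist i' a, i') ↔
      (i' = i ∧ Odd (Nat.card B)) ∨ 𝓕.twist i' g = a := by
  by_cases hi' : i' = i
  · subst hi'
    simp [bareFrame_adj_self, 𝓕.twist_eq_comm, hi, hg]
  by_cases hskew : P.Skew i i'
  · simp [hskew.bareFrame_adj_iff, hskew.twist_eq, hi', hi, hg]
  · rw [bareFrame_adj_iff_of_not_skew hi' hskew, 𝓕.twist_eq_comm]
    simp only [hi', false_and, false_or, and_iff_left_iff_imp]
    rintro ha rfl
    exact hi (by rw [← P.twist_mateRow, ha])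

theorem bareFrame_adj_twist_self {g : G} {i : Row B T} (hi : 𝓕.twist i g ≠ g) (i' : Row B T) :
    (P.bareFrame 𝓕).Adj (g, i) (𝓕.twist i' g, i') ↔
      𝓕.twist i' g = g ∨
        𝓕.twist i' g = 𝓕.twist i g ∧ i' ≠ P.mateRow i ∧ (i' = i → Odd (Nat.card B)) := by
  by_cases hi' : i' = i
  · subst hi'
    simp [bareFrame_adj_self, hi, eq_comm (b := P.mateRow i'), and_comm]
  by_cases hskew : P.Skew i i'
  · simp [hskew.bareFrame_adj_iff, hskew.twist_eq, hi', hskew.ne_mateRow]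
  · rw [bareFrame_adj_iff_of_not_skew hi' hskew]
    constructor
    · exact fun h => .inl h.1
    · rintro (h | ⟨h, hmate, -⟩)
      · exact ⟨h, by rintro rfl; exact hi (by rw [← P.twist_mateRow, h])⟩
      · exact (hskew (P.skew_of_twist_eq 𝓕 h hi' hmate)).elim

theorem ncard_twist_eq_twist_add_two [Finite B] [Finite T] {g : G} {i : Row B T}
    (hi : 𝓕.twist i g ≠ g) :
    {i' | 𝓕.twist i' g = 𝓕.twist i g ∧ i' ≠ P.mateRow i ∧
      (i' = i → Odd (Nat.card B))}.ncard + 2 = 2 * ((Nat.card B + 1) / 2) := by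
  let S := {i' : Row B T | 𝓕.twist i' g = 𝓕.twist i g}
  have hS : (S \ {P.mateRow i}).ncard + 1 = Nat.card B := by
    rw [Set.ncard_sdiff_singleton_add_one (by simp [S, P.twist_mateRow]), 𝓕.ncard_twist_eq hi]
  by_cases hB : Odd (Nat.card B)
  · have : {i' | 𝓕.twist i' g = 𝓕.twist i g ∧ i' ≠ P.mateRow i ∧ (i' = i → Odd (Nat.card B))} =
        S \ {P.mateRow i} := by ext; simp [S, hB]
    rw [this]
    grind
  · have : {i' | 𝓕.twist i' g = 𝓕.twist i g ∧ i' ≠ P.mateRow i ∧ (i' = i → Odd (Nat.card B))} =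
        (S \ {P.mateRow i}) \ {i} := by ext; simp [S, hB, and_assoc]
    have hmem : i ∈ S \ {P.mateRow i} := ⟨rfl, fun h => hB (P.odd_of_mateRow_eq h.symm)⟩
    rw [← Set.ncard_sdiff_singleton_add_one hmem] at hS
    rw [this]
    grind

theorem isColorRegular_bareFrame [Finite B] [Finite T] :
    ∃ γ : (P.bareFrame (T := T) 𝓕).Coloring G,
      IsColorRegular γ (2 * ((Nat.card B + 1) / 2)) := by
  refine ⟨.mk (fun x => 𝓕.twist x.2 x.1) (P.twist_ne_of_bareFrame_adj 𝓕), fun ⟨g, i⟩ a ha => ?_⟩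
  change a ≠ 𝓕.twist i g at ha
  refine (ncard_color_fiber 𝓕.twist a _).trans ?_
  have (i' : Row B T) : (𝓕.twist i').symm a = 𝓕.twist i' a := by
    rw [Equiv.symm_apply_eq, 𝓕.twist_twist]
  simp only [this]
  by_cases hg : a = g
  · subst hg
    simp only [P.bareFrame_adj_twist_self 𝓕 ha.symm]
    rw [← P.ncard_twist_eq_twist_add_two 𝓕 ha.symm, ← 𝓕.ncard_twist_eq_self a, add_comm]
    refine Set.ncard_union_eq (Set.disjoint_left.2 fun i' h h' => ?_)
    exact ha (h.symm.trans h'.1)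
  · simp only [P.bareFrame_adj_twist_of_ne 𝓕 ha.symm hg]
    have hfiber := 𝓕.ncard_twist_eq (B := B) hg
    by_cases hB : Odd (Nat.card B)
    · have : {i' | i' = i ∧ Odd (Nat.card B) ∨ 𝓕.twist i' g = a} =
          insert i {i' | 𝓕.twist i' g = a} := by ext; simp [hB]
      rw [this, Set.ncard_insert_of_notMem (s := {i' | 𝓕.twist i' g = a}) ha.symm, hfiber]
      grind
    · simp only [hB, and_false, false_or, hfiber]
      grind

end Pairing

end Frame

section RowPacking

variable {G T B C : Type*}

/-- A family of edge-disjoint relations on the rows, indexed by `C`, that is to be lifted to the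
vertices outside the frame. The permutations `label c` of the rows turn the perfect matchings
`shift` left to the frame into the identity, so that each relation lifts to a `liftGraph`. -/
structure RowPacking (P : Pairing B) (𝓕 : OneFactorization G T) (C : Type*) where
  Rel : C → Row B T → Row B T → Prop
  symm : ∀ c i i', Rel c i i' → Rel c i' i
  unique : ∀ {c c' i i'}, Rel c i i' → Rel c' i i' → c = c'
  even_of_loop : ∀ {c i}, Rel c i i → Even (Nat.card B)
  halfDegree : C → ℕ
  ncard_rel : ∀ c i, {i' | Rel c i i'}.ncard = 2 * halfDegree c
  label : C → Row B T → Equiv.Perm G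
  label_shift : ∀ {c i i'}, Rel c i i' → ∀ g, label c i' (P.shift 𝓕 i i' g) = label c i g

namespace RowPacking

variable {P : Pairing B} {𝓕 : OneFactorization G T}

/-- The graph on the vertices obtained from the relation with index `c`. -/
def graph (R : RowPacking P 𝓕 C) (c : C) : SimpleGraph (G × Row B T) :=
  liftGraph (R.Rel c) (R.symm c) (R.label c)

theorem graph_adj (R : RowPacking P 𝓕 C) {c : C} {x y : G × Row B T} :
    (R.graph c).Adj x y ↔ R.Rel c x.2 y.2 ∧ y.1 ≠ P.shift 𝓕 x.2 y.2 x.1 := by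
  refine and_congr_right fun h => ?_
  rw [← R.label_shift h, (R.label c y.2).injective.ne_iff, ne_comm]

theorem graph_le_compl_frame (R : RowPacking P 𝓕 C) (c : C) : R.graph c ≤ (P.frame 𝓕)ᶜ := by
  intro x y h
  obtain ⟨hrel, hne⟩ := R.graph_adj.1 h
  refine ⟨h.ne, ?_⟩
  rintro ⟨-, ⟨heq, hodd⟩ | heq⟩
  · exact Nat.not_even_iff_odd.2 hodd (R.even_of_loop (i := x.2) (by rwa [← heq] at hrel))
  · exact hne heq

theorem existsUnique_graph_adj (R : RowPacking P 𝓕 C)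
    (hR : ∀ i i', (i = i' → Even (Nat.card B)) → ∃ c, R.Rel c i i') {x y : G × Row B T}
    (h : (P.frame 𝓕)ᶜ.Adj x y) : ∃! c, (R.graph c).Adj x y := by
  obtain ⟨hne, hframe⟩ := h
  obtain ⟨hloop, hshift⟩ := not_or.1 fun h => hframe ⟨hne, h⟩
  obtain ⟨c, hc⟩ := hR x.2 y.2 fun heq => Nat.not_odd_iff_even.1 fun hodd => hloop ⟨heq, hodd⟩
  exact ⟨c, R.graph_adj.2 ⟨hc, hshift⟩, fun c' hc' => R.unique (R.graph_adj.1 hc').1 hc⟩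

theorem natCard_row [Finite B] [Finite T] :
    Nat.card (Row B T) = 2 + Nat.card B * Nat.card T := by
  rw [Nat.card_sum, Nat.card_prod, Nat.card_eq_fintype_card, Fintype.card_bool]

theorem exists_isURD_of_covers [Finite G] [Finite B] [Finite T] [Finite C] {n : ℕ}
    (hG : Nat.card G = n + 1) (R : RowPacking P 𝓕 C)
    (hR : ∀ i i', (i = i' → Even (Nat.card B)) → ∃ c, R.Rel c i i') :
    ∃ s, IsURD n ((n + 1) * (2 + Nat.card B * Nat.card T)) 1 s := by
  have := Fintype.ofFinite G
  have := Fintype.ofFinite (G × Row B T)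
  have hK (j : Option C) : (j.elim (P.bareFrame 𝓕) R.graph) ≤ (P.matching 𝓕)ᶜ := by
    rcases j with _ | c
    · exact fun x y h => ⟨h.ne, h.2⟩
    · exact (R.graph_le_compl_frame c).trans (compl_le_compl (P.matching_le_frame 𝓕))
  have hdec (x y : G × Row B T) (h : (P.matching 𝓕)ᶜ.Adj x y) :
      ∃! j : Option C, (j.elim (P.bareFrame 𝓕) R.graph).Adj x y := by
    by_cases hframe : (P.frame 𝓕).Adj x y
    · refine ⟨none, ⟨hframe, h.2⟩, ?_⟩
      rintro (_ | c) hc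
      exacts [rfl, ((R.graph_le_compl_frame c hc).2 hframe).elim]
    · obtain ⟨c, hc, huniq⟩ := R.existsUnique_graph_adj hR ⟨h.1, hframe⟩
      refine ⟨some c, hc, ?_⟩
      rintro (_ | c') hc'
      exacts [(hframe hc'.1).elim, congrArg some (huniq c' hc')]
  have hcol (j : Option C) : ∃ (q : ℕ) (γ : (j.elim (P.bareFrame 𝓕) R.graph).Coloring G),
      IsColorRegular γ (2 * q) := by
    rcases j with _ | c
    · exact ⟨_, P.isColorRegular_bareFrame 𝓕⟩
    · exact ⟨R.halfDegree c, exists_isColorRegular_liftGraph (R.symm c) (R.ncard_rel c) _⟩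
  rw [← natCard_row, ← hG, ← Nat.card_prod, Nat.card_eq_fintype_card]
  exact exists_isURD_of_isColorRegular (by rwa [← Nat.card_eq_fintype_card])
    (fun x => existsUnique_eq') hK hdec hcol

/-- The pairs of rows that lie in no relation of the packing. -/
def Rest (R : RowPacking P 𝓕 C) (i i' : Row B T) : Prop :=
  (i = i' → Even (Nat.card B)) ∧ ∀ c, ¬ R.Rel c i i'

theorem ncard_rest_add_sum [Finite B] [Finite T] [Fintype C] (R : RowPacking P 𝓕 C)
    (i : Row B T) :
    {i' | R.Rest i i'}.ncard + ∑ c, 2 * R.halfDegree c + Nat.card B % 2 =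
      2 + Nat.card B * Nat.card T := by
  have hdisj : Disjoint {i' | R.Rest i i'} (⋃ c, {i' | R.Rel c i i'}) :=
    Set.disjoint_left.2 fun i' h h' => (Set.mem_iUnion.1 h').elim h.2
  have hpairwise : Pairwise fun c c' => Disjoint {i' | R.Rel c i i'} {i' | R.Rel c' i i'} :=
    fun c c' hne => Set.disjoint_left.2 fun i' h h' => hne (R.unique h h')
  have hsum : (⋃ c, {i' | R.Rel c i i'}).ncard = ∑ c, 2 * R.halfDegree c := by
    rw [Set.ncard_iUnion_of_finite (fun _ => Set.toFinite _) hpairwise,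
      finsum_eq_sum_of_fintype]
    simp only [R.ncard_rel]
  have hunion : {i' | R.Rest i i'} ∪ ⋃ c, {i' | R.Rel c i i'} =
      {i' | i = i' → Even (Nat.card B)} := by
    ext i'
    by_cases h : ∃ c, R.Rel c i i'
    · have : i = i' → Even (Nat.card B) := by
        rintro rfl
        exact h.elim fun c => R.even_of_loop
      simpa [h] using this
    · simp [Rest, not_exists.1 h]
  rw [← hsum, ← Set.ncard_union_eq hdisj, hunion, ← natCard_row]
  rcases Nat.even_or_odd (Nat.card B) with hB | hB
  · simp [hB, Nat.even_iff.1 hB]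
  · have : {i' | i = i' → Even (Nat.card B)} = Set.univ \ {i} := by
      ext
      simp [Nat.not_even_iff_odd.2 hB, eq_comm]
    rw [this, Nat.odd_iff.1 hB, Set.ncard_sdiff_singleton_add_one (Set.mem_univ i), Set.ncard_univ]

theorem exists_ncard_rest [Finite B] [Finite T] [Finite C] (R : RowPacking P 𝓕 C)
    (hT : Odd (Nat.card T)) : ∃ q, ∀ i, {i' | R.Rest i i'}.ncard = 2 * q := by
  have := Fintype.ofFinite C
  obtain ⟨t, ht⟩ := hT
  refine ⟨1 + Nat.card B / 2 + Nat.card B * t - ∑ c, R.halfDegree c, fun i => ?_⟩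
  have h := R.ncard_rest_add_sum i
  rw [← Finset.mul_sum, ht, mul_add, mul_left_comm] at h
  omega

/-- The decomposition obtained from a packing by lifting the remaining pairs of rows untwisted. -/
noncomputable def complete [Finite B] [Finite T] [Finite C] (R : RowPacking P 𝓕 C)
    (hT : Odd (Nat.card T)) (hR : ∀ i i', P.Skew i i' → ∃ c, R.Rel c i i') :
    RowPacking P 𝓕 (Option C) where
  Rel c := c.elim R.Rest R.Rel
  symm := by
    rintro (_ | c) i i' h
    · exact ⟨fun heq => h.1 heq.symm, fun c hc => h.2 c (R.symm c _ _ hc)⟩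
    · exact R.symm c i i' h
  unique := by
    rintro (_ | c) (_ | c') i i' h h'
    · rfl
    · exact (h.2 c' h').elim
    · exact (h'.2 c h).elim
    · exact congrArg some (R.unique h h')
  even_of_loop := by
    rintro (_ | c) i h
    exacts [h.1 rfl, R.even_of_loop h]
  halfDegree c := c.elim (R.exists_ncard_rest hT).choose R.halfDegree
  ncard_rel := by
    rintro (_ | c)
    exacts [(R.exists_ncard_rest hT).choose_spec, R.ncard_rel c]
  label c := c.elim 1 R.label
  label_shift := by
    rintro (_ | c) i i' h g
    · have not_skew : ¬ P.Skew i i' := fun hs => (hR i i' hs).elim h.2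
      simp [Pairing.shift, not_skew]
    · exact R.label_shift h g

theorem exists_isURD [Finite G] [Finite B] [Finite T] [Finite C] {n : ℕ}
    (hG : Nat.card G = n + 1) (hT : Odd (Nat.card T)) (R : RowPacking P 𝓕 C)
    (hR : ∀ i i', P.Skew i i' → ∃ c, R.Rel c i i') :
    ∃ s, IsURD n ((n + 1) * (2 + Nat.card B * Nat.card T)) 1 s := by
  refine (R.complete hT hR).exists_isURD_of_covers hG fun i i' h => ?_
  by_cases hc : ∃ c, R.Rel c i i'
  · exact hc.imp' some fun _ => id
  · exact ⟨none, h, not_exists.1 hc⟩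

end RowPacking

end RowPacking

section Zigzag

variable {m : ℕ}

/-- The class of the pair `x, y` in a decomposition of the pairs of points of `ZMod m` into
zigzags, each of which consists of the pairs with two consecutive values of `x + y`. -/
def zigClass (x y : ZMod m) : ℕ :=
  (x + y).val / 2

theorem zigClass_comm (x y : ZMod m) : zigClass x y = zigClass y x := by
  rw [zigClass, add_comm, zigClass]

theorem zigClass_natCast_self {c : ℕ} (hc : 2 * c < m) : zigClass (c : ZMod m) c = c := by
  rw [zigClass, ← Nat.cast_add, ZMod.val_natCast_of_lt (by lia)]
  lia

/-- The number of neighbours of a point in the zigzag with index `c`. -/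
noncomputable def zigDegree (m c : ℕ) : ℕ :=
  {s : ZMod m | s.val / 2 = c}.ncard

theorem ncard_zigClass_eq (x : ZMod m) (c : ℕ) :
    {y | zigClass x y = c}.ncard = zigDegree m c :=
  Set.ncard_preimage_of_injective_subset_range (s := {s : ZMod m | s.val / 2 = c})
    (add_right_injective x)
    fun s _ => ⟨s - x, add_sub_cancel x s⟩

theorem ncard_zigClass_self_eq (hm : Odd m) (c : ℕ) :
    {x : ZMod m | zigClass x x = c}.ncard = zigDegree m c := by
  obtain ⟨u, hu⟩ := isUnit_two_of_odd hm
  simp only [zigClass, ← two_mul, ← hu]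
  exact Set.ncard_preimage_of_injective_subset_range (s := {s : ZMod m | s.val / 2 = c})
    u.mulLeft.injective fun s _ => u.mulLeft.surjective s

/-- One of the two sides between which the zigzag with index `c` alternates. -/
def zigSide (c : ℕ) (x : ZMod m) : Prop :=
  (x - c).val ∈ Set.Icc 1 (m / 2)

theorem not_zigSide_natCast (c : ℕ) : ¬ zigSide c (c : ZMod m) := by
  simp [zigSide]

variable [NeZero m]

theorem zigClass_lt (x y : ZMod m) : zigClass x y < (m + 1) / 2 := by
  have := (x + y).val_lt
  grind [zigClass]

theorem image_val_zig {c : ℕ} :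
    ZMod.val '' {s : ZMod m | s.val / 2 = c} = Set.Iio m ∩ Set.Ico (2 * c) (2 * c + 2) := by
  ext a
  constructor
  · rintro ⟨s, rfl, rfl⟩
    exact ⟨s.val_lt, by grind⟩
  · rintro ⟨ha, ha'⟩
    exact ⟨a, by grind [ZMod.val_natCast_of_lt ha], ZMod.val_natCast_of_lt ha⟩

theorem zigDegree_le_two (c : ℕ) : zigDegree m c ≤ 2 := by
  rw [zigDegree, ← Set.ncard_image_of_injective _ (ZMod.val_injective m), image_val_zig]
  exact (Set.ncard_inter_le_ncard_right _ _).trans (by simp)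

theorem zigDegree_eq_two {c : ℕ} (hc : 2 * c + 1 < m) : zigDegree m c = 2 := by
  rw [zigDegree, ← Set.ncard_image_of_injective _ (ZMod.val_injective m), image_val_zig,
    Set.inter_eq_right.2 fun a ha => by grind]
  simp

theorem val_sub_add_val_sub (x y : ZMod m) :
    (x - zigClass x y).val + (y - zigClass x y).val ∈ ({0, 1, m, m + 1} : Set ℕ) := by
  let c := zigClass x y
  have hmod : (x - c).val + (y - c).val ≡ (x + y).val % 2 [MOD m] := by
    have h : (2 * c + ((x + y).val % 2 : ℕ) : ZMod m) = x + y := by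
      have := congrArg (Nat.cast : ℕ → ZMod m) (Nat.div_add_mod (x + y).val 2)
      rwa [ZMod.natCast_zmod_val, Nat.cast_add, Nat.cast_mul] at this
    rw [← ZMod.natCast_eq_natCast_iff, Nat.cast_add, ZMod.natCast_zmod_val, ZMod.natCast_zmod_val]
    linear_combination -h
  rcases lt_or_ge ((x - c).val + (y - c).val) ((x + y).val % 2) with hlt | hge
  · exact .inl (by lia)
  · obtain ⟨k, hk⟩ := (Nat.modEq_iff_dvd' hge).1 hmod.symm
    have := (x - c).val_lt
    have := (y - c).val_lt
    have : k < 2 := by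
      by_contra! h
      have := Nat.mul_le_mul_left m h
      lia
    simp only [Set.mem_insert_iff, Set.mem_singleton_iff]
    interval_cases k <;> lia

theorem zigSide_iff_not_zigSide {x y : ZMod m} (hxy : x ≠ y) :
    zigSide (zigClass x y) x ↔ ¬ zigSide (zigClass x y) y := by
  have hsum := val_sub_add_val_sub x y
  have hne : (x - zigClass x y).val ≠ (y - zigClass x y).val :=
    fun h => hxy (sub_left_injective (ZMod.val_injective m h))
  have := (x - zigClass x y).val_lt
  have := (y - zigClass x y).val_lt
  simp only [zigSide, Set.mem_Icc, Set.mem_insert_iff, Set.mem_singleton_iff] at hsum ⊢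
  lia

theorem not_zigSide_self (hm : Odd m) (x : ZMod m) : ¬ zigSide (zigClass x x) x := by
  have hsum := val_sub_add_val_sub x x
  have := (x - zigClass x x).val_lt
  simp only [zigSide, Set.mem_Icc, Set.mem_insert_iff, Set.mem_singleton_iff] at hsum ⊢
  grind

end Zigzag

section Sides

variable {G T B : Type*}

theorem ncard_setOf_sum {α β : Type*} [Finite α] [Finite β] (p : α ⊕ β → Prop) :
    {z | p z}.ncard = {a | p (.inl a)}.ncard + {b | p (.inr b)}.ncard := by
  conv_lhs => rw [← Set.image_preimage_inl_union_image_preimage_inr {z | p z},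
    Set.ncard_union_eq Set.disjoint_image_inl_image_inr,
    Set.ncard_image_of_injective _ Sum.inl_injective,
    Set.ncard_image_of_injective _ Sum.inr_injective]
  rfl

open Classical in
/-- The permutations that twist the rows on one side and fix the others. -/
noncomputable def OneFactorization.sideLabel (𝓕 : OneFactorization G T) (side : Row B T → Prop)
    (i : Row B T) : Equiv.Perm G :=
  if side i then 𝓕.twist i else 1

theorem OneFactorization.sideLabel_shift (𝓕 : OneFactorization G T) (P : Pairing B)
    {side : Row B T → Prop} {i i' : Row B T} (hskew : P.Skew i i' → (side i ↔ ¬ side i'))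
    (hother : ¬ P.Skew i i' → (side i ↔ side i') ∧ (side i → 𝓕.twist i' = 𝓕.twist i)) (g : G) :
    𝓕.sideLabel side i' (P.shift 𝓕 i i' g) = 𝓕.sideLabel side i g := by
  by_cases h : P.Skew i i'
  · by_cases hside : side i'
    · simp [sideLabel, Pairing.shift, h, hside, hskew h, h.twist_eq, 𝓕.twist_twist]
    · simp [sideLabel, Pairing.shift, h, hside, hskew h]
  · by_cases hside : side i
    · simp [sideLabel, Pairing.shift, h, hside, ← (hother h).1, (hother h).2 hside]
    · simp [sideLabel, Pairing.shift, h, hside, ← (hother h).1]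

/-- The side of a row in the zigzag with index `c`, where `x b` is the point of the block `b`. -/
def rowSide {m : ℕ} (x : B → ZMod m) (c : ℕ) : Row B T → Prop :=
  Sum.elim (fun _ => False) fun p => zigSide c (x p.1)

end Sides

section EvenBlocks

variable {G T : Type*} {h : ℕ}

/-- The pairing of the blocks `(x, false)` and `(x, true)`. -/
def evenPairing (h : ℕ) : Pairing (ZMod h × Bool) where
  mate b := (b.1, !b.2)
  involutive b := by simp
  odd_of_fixed b hb := by simpa using congrArg Prod.snd hb

theorem evenPairing_skew {b b' : ZMod h × Bool} {t t' : T} :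
    (evenPairing h).Skew (.inr (b, t)) (.inr (b', t')) ↔ t = t' ∧ b.1 ≠ b'.1 := by
  obtain ⟨x, ε⟩ := b
  obtain ⟨x', ε'⟩ := b'
  refine and_congr_right fun _ => ?_
  cases ε <;> cases ε' <;> simp [evenPairing, eq_comm]

/-- The zigzag with index `c` on an even number of blocks. For the one-factors in `A c`, the
joins between the two blocks at its end point `c` are redirected to the plain rows. -/
def EvenRel (A : ℕ → Set T) (c : ℕ) : Row (ZMod h × Bool) T → Row (ZMod h × Bool) T → Prop
  | .inl _, .inl _ => False
  | .inl _, .inr (b, t) | .inr (b, t), .inl _ => b.1 = c ∧ t ∈ A c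
  | .inr (b, t), .inr (b', t') =>
      t = t' ∧ zigClass b.1 b'.1 = c ∧ ¬ (b.1 = c ∧ b'.1 = c ∧ t ∈ A c)

theorem EvenRel.symm {A : ℕ → Set T} {c : ℕ} {i i' : Row (ZMod h × Bool) T}
    (hi : EvenRel A c i i') : EvenRel A c i' i := by
  rcases i with _ | ⟨b, t⟩ <;> rcases i' with _ | ⟨b', t'⟩ <;> try exact hi
  obtain ⟨rfl, hclass, hend⟩ := hi
  exact ⟨rfl, by rwa [zigClass_comm], fun h => hend ⟨h.2.1, h.1, h.2.2⟩⟩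

theorem EvenRel.unique {A : ℕ → Set T} {c c' : ℕ} (hc : c < h) (hc' : c' < h)
    {i i' : Row (ZMod h × Bool) T} (hi : EvenRel A c i i') (hi' : EvenRel A c' i i') :
    c = c' := by
  have cast_inj {x : ZMod h} (hx : x = c) (hx' : x = c') : c = c' := by
    rw [← ZMod.val_natCast_of_lt hc, ← hx, hx', ZMod.val_natCast_of_lt hc']
  rcases i with _ | ⟨b, t⟩ <;> rcases i' with _ | ⟨b', t'⟩
  exacts [hi.elim, cast_inj hi.1 hi'.1, cast_inj hi.1 hi'.1, hi.2.1.symm.trans hi'.2.1]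

theorem EvenRel.ncard [NeZero h] [Finite T] {A : ℕ → Set T} {c : ℕ} (hc : 2 * c < h)
    (hA : (A c).ncard = zigDegree h c) (i : Row (ZMod h × Bool) T) :
    {i' | EvenRel A c i i'}.ncard = 2 * zigDegree h c := by
  rw [ncard_setOf_sum]
  rcases i with e | ⟨⟨x, ε⟩, t⟩
  · have hblocks : {p | EvenRel A c (.inl e) (.inr p)} = ({(c : ZMod h)} ×ˢ .univ) ×ˢ A c := by
      ext ⟨⟨x, ε⟩, t⟩
      simp [EvenRel]
    rw [hblocks]
    simp [EvenRel, Set.ncard_prod, hA]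
  · by_cases hend : x = c ∧ t ∈ A c
    · obtain ⟨rfl, ht⟩ := hend
      let N : Set (ZMod h) := {y | zigClass (c : ZMod h) y = c}
      have hblocks : {p | EvenRel A c (.inr ((c, ε), t)) (.inr p)} =
          ((N \ {(c : ZMod h)}) ×ˢ .univ) ×ˢ {t} := by
        ext ⟨⟨y, ε'⟩, t'⟩
        grind [EvenRel]
      have hN : (N \ {(c : ZMod h)}).ncard + 1 = zigDegree h c := by
        rw [Set.ncard_sdiff_singleton_add_one (s := N) (zigClass_natCast_self hc),
          ncard_zigClass_eq]
      rw [hblocks, ← hN]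
      simpa [EvenRel, Set.ncard_prod, ht] using by ring
    · have hblocks : {p | EvenRel A c (.inr ((x, ε), t)) (.inr p)} =
          ({y | zigClass x y = c} ×ˢ .univ) ×ˢ {t} := by
        ext ⟨⟨y, ε'⟩, t'⟩
        grind [EvenRel]
      rw [hblocks]
      simp [EvenRel, Set.ncard_prod, hend, ncard_zigClass_eq, mul_comm]

theorem EvenRel.sideLabel_shift [NeZero h] {A : ℕ → Set T} {c : ℕ}
    {i i' : Row (ZMod h × Bool) T} (hi : EvenRel A c i i') (𝓕 : OneFactorization G T) (g : G) :
    𝓕.sideLabel (rowSide Prod.fst c) i' ((evenPairing h).shift 𝓕 i i' g) =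
      𝓕.sideLabel (rowSide Prod.fst c) i g := by
  have not_side {x : ZMod h} (hx : x = c) : ¬ zigSide c x := hx ▸ not_zigSide_natCast c
  apply 𝓕.sideLabel_shift <;> intro hskew <;> rcases i with e | ⟨b, t⟩ <;>
    rcases i' with e' | ⟨b', t'⟩
  · exact hskew.elim
  · exact hskew.elim
  · exact hskew.elim
  · obtain rfl := hi.2.1
    exact zigSide_iff_not_zigSide (evenPairing_skew.1 hskew).2
  · exact hi.elim
  · simp [rowSide, not_side hi.1]
  · simp [rowSide, not_side hi.1]
  · obtain rfl := hi.1
    have hb : b.1 = b'.1 := by simpa [evenPairing_skew] using hskew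
    simp [rowSide, hb]

/-- The zigzags on an even number of blocks, with `A c` as large as the degree of the zigzag. -/
noncomputable def evenPacking [NeZero h] [Finite T] (𝓕 : OneFactorization G T) {A : ℕ → Set T}
    (hA : ∀ c, (A c).ncard = zigDegree h c) :
    RowPacking (evenPairing h) 𝓕 (Fin ((h + 1) / 2)) where
  Rel c := EvenRel A c
  symm _ _ _ := .symm
  unique {c c' _ _} hi hi' := Fin.ext (hi.unique (by lia) (by lia) hi')
  even_of_loop _ := by simp
  halfDegree c := zigDegree h c
  ncard_rel c := EvenRel.ncard (by lia) (hA c)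
  label c := 𝓕.sideLabel (rowSide Prod.fst c)
  label_shift hi := hi.sideLabel_shift 𝓕

theorem exists_isURD_of_even [Finite G] [Finite T] {n : ℕ} (hG : Nat.card G = n + 1)
    (hodd : Odd (Nat.card T)) (hT : 1 < Nat.card T) (𝓕 : OneFactorization G T) (hh : h ≠ 0) :
    ∃ s, IsURD n ((n + 1) * (2 + 2 * h * Nat.card T)) 1 s := by
  have : NeZero h := ⟨hh⟩
  have hcard (c : ℕ) : zigDegree h c ≤ (Set.univ : Set T).ncard := by
    rw [Set.ncard_univ]
    exact (zigDegree_le_two c).trans hT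
  choose A _ hA using fun c => Set.exists_subset_card_eq (hcard c)
  have hblocks : Nat.card (ZMod h × Bool) = 2 * h := by simp [mul_comm]
  rw [← hblocks]
  refine (evenPacking 𝓕 hA).exists_isURD hG hodd fun i i' hskew => ?_
  rcases i with e | ⟨b, t⟩ <;> rcases i' with e' | ⟨b', t'⟩ <;> try exact hskew.elim
  obtain ⟨rfl, hne⟩ := evenPairing_skew.1 hskew
  exact ⟨⟨zigClass b.1 b'.1, zigClass_lt _ _⟩, rfl, rfl,
    fun ⟨hb, hb', _⟩ => hne (hb.trans hb'.symm)⟩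

end EvenBlocks

section OddBlocks

variable {G T : Type*} {h : ℕ}

theorem zigClass_eq_iff {x y : ZMod (2 * h + 1)} : zigClass x y = h ↔ y = -1 - x := by
  rw [eq_sub_iff_add_eq', ← (ZMod.val_injective _).eq_iff, ZMod.val_neg_one]
  have := (x + y).val_lt
  grind [zigClass]

theorem exists_eq_pair_of_ncard_eq_two {α : Type*} {S : Set α} (hS : S.ncard = 2) {x : α}
    (hx : x ∈ S) : ∃ y ≠ x, S = {x, y} := by
  obtain ⟨a, b, hab, rfl⟩ := Set.ncard_eq_two.1 hS
  rcases hx with rfl | rfl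
  exacts [⟨b, hab.symm, rfl⟩, ⟨a, hab, Set.pair_comm _ _⟩]

theorem exists_end_ne {c : ℕ} (hc : c < h) {x : ZMod (2 * h + 1)} (hx : zigClass x x = c) :
    ∃ y ≠ x, {z : ZMod (2 * h + 1) | zigClass z z = c} = {x, y} :=
  exists_eq_pair_of_ncard_eq_two (by
    rw [ncard_zigClass_self_eq (odd_two_mul_add_one h), zigDegree_eq_two (by lia)]) hx

theorem end_iff_not_end {c : ℕ} (hc : c < h) {x y : ZMod (2 * h + 1)} (hx : zigClass x x = c)
    (hy : zigClass y y = c) (hxy : x ≠ y) : x = c ↔ y ≠ c := by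
  obtain ⟨z, -, hz⟩ := exists_end_ne hc (zigClass_natCast_self (c := c) (by lia))
  have hx : x = c ∨ x = z := hz.le hx
  have hy : y = c ∨ y = z := hz.le hy
  grind

/-- The pairing of the blocks `x` and `-1 - x`, which are the pairs of the last, incomplete
zigzag. -/
def oddPairing (h : ℕ) : Pairing (ZMod (2 * h + 1)) where
  mate x := -1 - x
  involutive x := by ring
  odd_of_fixed _ _ := by simp

theorem oddPairing_skew {x x' : ZMod (2 * h + 1)} {t t' : T} :
    (oddPairing h).Skew (.inr (x, t)) (.inr (x', t')) ↔ t = t' ∧ x' ≠ x ∧ zigClass x x' < h := by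
  have hlt := zigClass_lt x x'
  have hmate : x' ≠ -1 - x ↔ zigClass x x' < h := by
    rw [ne_eq, ← zigClass_eq_iff]
    lia
  exact and_congr_right fun _ => and_congr_right fun _ => hmate

/-- Shifts the one-factors on one of the two end points of the zigzag with index `c`. -/
def endPerm (τ : Equiv.Perm T) (c : ℕ) (x : ZMod (2 * h + 1)) : Equiv.Perm T :=
  if x = c then τ else 1

theorem ne_of_endPerm_eq {τ : Equiv.Perm T} (hτ : ∀ t, τ t ≠ t) {c : ℕ} (hc : c < h)
    {x x' : ZMod (2 * h + 1)} (hx : zigClass x x = c) (hx' : zigClass x' x' = c) (hne : x ≠ x')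
    {t t' : T} (ht : endPerm τ c x t = endPerm τ c x' t') : t ≠ t' := by
  rintro rfl
  have := end_iff_not_end hc hx hx' hne
  by_cases hxc : x = c
  · exact hτ t (by simpa [endPerm, hxc, this.1 hxc] using ht)
  · exact hτ t (by simpa [endPerm, hxc, not_not.1 (mt this.2 hxc)] using ht.symm)

/-- The zigzag with index `c` on an odd number of blocks. Each row at an end point of the zigzag
is joined to a plain row or to a row at the other end point with a different one-factor. -/
def OddRel (τ : Equiv.Perm T) (ε : Bool ↪ T) (c : ℕ) :
    Row (ZMod (2 * h + 1)) T → Row (ZMod (2 * h + 1)) T → Prop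
  | .inl _, .inl _ => False
  | .inl e, .inr (x, t) | .inr (x, t), .inl e => zigClass x x = c ∧ endPerm τ c x t = ε e
  | .inr (x, t), .inr (x', t') => x ≠ x' ∧ (zigClass x x' = c ∧ t = t' ∨ zigClass x x = c ∧
      zigClass x' x' = c ∧ endPerm τ c x t = endPerm τ c x' t' ∧ endPerm τ c x t ∉ Set.range ε)

variable {τ : Equiv.Perm T} {ε : Bool ↪ T} {c : ℕ} {i i' : Row (ZMod (2 * h + 1)) T}

theorem OddRel.symm (hi : OddRel τ ε c i i') : OddRel τ ε c i' i := by
  rcases i with _ | ⟨x, t⟩ <;> rcases i' with _ | ⟨x', t'⟩ <;> try exact hi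
  obtain ⟨hne, ⟨hclass, rfl⟩ | ⟨hx, hx', hlabel, hplain⟩⟩ := hi
  · exact ⟨hne.symm, .inl ⟨by rwa [zigClass_comm], rfl⟩⟩
  · exact ⟨hne.symm, .inr ⟨hx', hx, hlabel.symm, hlabel ▸ hplain⟩⟩

theorem OddRel.unique (hτ : ∀ t, τ t ≠ t) {c' : ℕ} (hc : c < h) (hc' : c' < h)
    (hi : OddRel τ ε c i i') (hi' : OddRel τ ε c' i i') : c = c' := by
  rcases i with _ | ⟨x, t⟩ <;> rcases i' with _ | ⟨x', t'⟩
  · exact hi.elim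
  · exact hi.1.symm.trans hi'.1
  · exact hi.1.symm.trans hi'.1
  · obtain ⟨hne, ⟨hclass, ht⟩ | ⟨hx, hx', hlabel, -⟩⟩ := hi <;>
      obtain ⟨-, ⟨hclass', ht'⟩ | ⟨hy, hy', hlabel', -⟩⟩ := hi'
    · exact hclass.symm.trans hclass'
    · exact (ne_of_endPerm_eq hτ hc' hy hy' hne hlabel' ht).elim
    · exact (ne_of_endPerm_eq hτ hc hx hx' hne hlabel ht').elim
    · exact hx.symm.trans hy

theorem OddRel.ne (hi : OddRel τ ε c i i') : i ≠ i' := by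
  rintro rfl
  rcases i with _ | ⟨x, t⟩
  exacts [hi, hi.1 rfl]

theorem OddRel.ncard_inl (hc : c < h) (e : Bool) :
    {i' : Row (ZMod (2 * h + 1)) T | OddRel τ ε c (.inl e) i'}.ncard = 2 := by
  have hrange : {i' : Row (ZMod (2 * h + 1)) T | OddRel τ ε c (.inl e) i'} =
      (fun x => .inr (x, (endPerm τ c x).symm (ε e))) '' {x | zigClass x x = c} := by
    ext (_ | ⟨x, t⟩)
    · simp [OddRel]
    · simpa [OddRel, Equiv.symm_apply_eq] using fun _ => eq_comm
  have hinj : Function.Injective fun x =>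
      (.inr (x, (endPerm τ c x).symm (ε e)) : Row (ZMod (2 * h + 1)) T) :=
    fun x y hxy => congrArg Prod.fst (Sum.inr_injective hxy)
  rw [hrange, Set.ncard_image_of_injective _ hinj,
    ncard_zigClass_self_eq (odd_two_mul_add_one h), zigDegree_eq_two (by lia)]

theorem OddRel.ncard_inr_of_not_end (hc : c < h) {x : ZMod (2 * h + 1)} (hx : zigClass x x ≠ c)
    (t : T) : {i' | OddRel τ ε c (.inr (x, t)) i'}.ncard = 2 := by
  have hrange : {i' | OddRel τ ε c (.inr (x, t)) i'} =
      (fun y => .inr (y, t)) '' {y | zigClass x y = c} := by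
    ext (_ | ⟨y, t'⟩)
    · simp [OddRel, hx]
    · grind [OddRel]
  have hinj : Function.Injective fun y => (.inr (y, t) : Row (ZMod (2 * h + 1)) T) :=
    fun y z hyz => congrArg Prod.fst (Sum.inr_injective hyz)
  rw [hrange, Set.ncard_image_of_injective _ hinj, ncard_zigClass_eq, zigDegree_eq_two (by lia)]

theorem OddRel.ncard_inr_of_end (hτ : ∀ t, τ t ≠ t) (hc : c < h) {x : ZMod (2 * h + 1)}
    (hx : zigClass x x = c) (t : T) : {i' | OddRel τ ε c (.inr (x, t)) i'}.ncard = 2 := by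
  obtain ⟨y, hyx, hends⟩ := exists_end_ne hc hx
  obtain ⟨z, hzx, hneighbors⟩ : ∃ z ≠ x, {z | zigClass x z = c} = {x, z} :=
    exists_eq_pair_of_ncard_eq_two (by rw [ncard_zigClass_eq, zigDegree_eq_two (by lia)]) hx
  have end_iff (b) : zigClass b b = c ↔ b = x ∨ b = y := Set.ext_iff.1 hends b
  have neighbor_iff (b) : zigClass x b = c ↔ b = x ∨ b = z := Set.ext_iff.1 hneighbors b
  by_cases hplain : ∃ e, ε e = endPerm τ c x t
  · obtain ⟨e, he⟩ := hplain
    have : {i' | OddRel τ ε c (.inr (x, t)) i'} = {.inl e, .inr (z, t)} := by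
      ext (e' | ⟨b, t'⟩)
      · simp [OddRel, hx, ← he, eq_comm]
      · have hrange : endPerm τ c x t ∈ Set.range ε := ⟨e, he⟩
        grind [OddRel]
    rw [this, Set.ncard_pair Sum.inl_ne_inr]
  · obtain ⟨t', ht'⟩ := (endPerm τ c y).surjective (endPerm τ c x t)
    have hne : t ≠ t' := ne_of_endPerm_eq hτ hc hx ((end_iff y).2 (.inr rfl)) hyx.symm ht'.symm
    have : {i' | OddRel τ ε c (.inr (x, t)) i'} = {.inr (y, t'), .inr (z, t)} := by
      ext (e' | ⟨b, s⟩)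
      · simpa [OddRel, hx] using fun h => hplain ⟨e', h.symm⟩
      · have label_iff : endPerm τ c x t = endPerm τ c y s ↔ s = t' := by
          rw [← ht', (endPerm τ c y).injective.eq_iff, eq_comm]
        constructor
        · rintro ⟨hxb, ⟨hb, rfl⟩ | ⟨-, hb, hlabel, -⟩⟩
          · obtain rfl := ((neighbor_iff b).1 hb).resolve_left hxb.symm
            exact .inr rfl
          · obtain rfl := ((end_iff b).1 hb).resolve_left hxb.symm
            exact .inl (by rw [label_iff.1 hlabel])
        · rintro (⟨⟨⟩⟩ | ⟨⟨⟩⟩)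
          · exact ⟨hyx.symm, .inr ⟨hx, (end_iff y).2 (.inr rfl), ht'.symm, hplain⟩⟩
          · exact ⟨hzx.symm, .inl ⟨(neighbor_iff z).2 (.inr rfl), rfl⟩⟩
    rw [this, Set.ncard_pair (by simp [hne.symm])]

theorem OddRel.ncard (hτ : ∀ t, τ t ≠ t) (hc : c < h) (i : Row (ZMod (2 * h + 1)) T) :
    {i' | OddRel τ ε c i i'}.ncard = 2 := by
  rcases i with e | ⟨x, t⟩
  · exact ncard_inl hc e
  · by_cases hx : zigClass x x = c
    exacts [ncard_inr_of_end hτ hc hx t, ncard_inr_of_not_end hc hx t]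

theorem OddRel.sideLabel_shift (hτ : ∀ t, τ t ≠ t) (hc : c < h) (hi : OddRel τ ε c i i')
    (𝓕 : OneFactorization G T) (g : G) :
    𝓕.sideLabel (rowSide id c) i' ((oddPairing h).shift 𝓕 i i' g) =
      𝓕.sideLabel (rowSide id c) i g := by
  have not_side {x : ZMod (2 * h + 1)} (hx : zigClass x x = c) : ¬ zigSide c x :=
    hx ▸ not_zigSide_self (odd_two_mul_add_one h) x
  apply 𝓕.sideLabel_shift <;> intro hskew <;> rcases i with e | ⟨x, t⟩ <;>
    rcases i' with e' | ⟨x', t'⟩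
  · exact hskew.elim
  · exact hskew.elim
  · exact hskew.elim
  · obtain ⟨ht, hne, -⟩ := oddPairing_skew.1 hskew
    obtain ⟨-, ⟨rfl, -⟩ | ⟨hx, hx', hlabel, -⟩⟩ := hi
    · exact zigSide_iff_not_zigSide hne.symm
    · exact (ne_of_endPerm_eq hτ hc hx hx' hne.symm hlabel ht).elim
  · exact hi.elim
  · simp [rowSide, not_side hi.1]
  · simp [rowSide, not_side hi.1]
  · obtain ⟨hne, ⟨rfl, ht⟩ | ⟨hx, hx', -⟩⟩ := hi
    · exact (hskew (oddPairing_skew.2 ⟨ht, hne.symm, hc⟩)).elim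
    · simp [rowSide, not_side hx, not_side hx']

/-- The zigzags on an odd number of blocks. -/
noncomputable def oddPacking (𝓕 : OneFactorization G T) (hτ : ∀ t, τ t ≠ t) (ε : Bool ↪ T) :
    RowPacking (oddPairing h) 𝓕 (Fin h) where
  Rel c := OddRel τ ε c
  symm _ _ _ := .symm
  unique {c c' _ _} hi hi' := Fin.ext (hi.unique hτ c.2 c'.2 hi')
  even_of_loop hi := (hi.ne rfl).elim
  halfDegree _ := 1
  ncard_rel c := OddRel.ncard hτ c.2
  label c := 𝓕.sideLabel (rowSide id c)
  label_shift {c _ _} hi := hi.sideLabel_shift hτ c.2 𝓕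

theorem exists_isURD_of_odd [Finite G] [Finite T] {n : ℕ} (hG : Nat.card G = n + 1)
    (hodd : Odd (Nat.card T)) (𝓕 : OneFactorization G T) (hτ : ∀ t, τ t ≠ t) (ε : Bool ↪ T)
    (h : ℕ) : ∃ s, IsURD n ((n + 1) * (2 + (2 * h + 1) * Nat.card T)) 1 s := by
  rw [← Nat.card_zmod (2 * h + 1)]
  refine (oddPacking 𝓕 hτ ε).exists_isURD hG hodd fun i i' hskew => ?_
  rcases i with e | ⟨x, t⟩ <;> rcases i' with e' | ⟨x', t'⟩ <;> try exact hskew.elim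
  obtain ⟨ht, hne, hlt⟩ := oddPairing_skew.1 hskew
  exact ⟨⟨zigClass x x', hlt⟩, hne.symm, .inl ⟨rfl, ht⟩⟩

end OddBlocks

section Existence

variable {G T : Type*}

/-- The packing without relations, for the case without blocks. -/
def emptyPacking (P : Pairing Empty) (𝓕 : OneFactorization G T) : RowPacking P 𝓕 Empty where
  Rel := nofun
  symm := nofun
  unique {c} := c.elim
  even_of_loop {c} := c.elim
  halfDegree := nofun
  ncard_rel := nofun
  label := nofun
  label_shift {c} := c.elim

theorem exists_isURD_of_isEmpty [Finite G] [Finite T] {n : ℕ} (hG : Nat.card G = n + 1)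
    (hodd : Odd (Nat.card T)) (𝓕 : OneFactorization G T) : ∃ s, IsURD n ((n + 1) * 2) 1 s := by
  have P : Pairing Empty := ⟨id, fun _ => rfl, nofun⟩
  have hR (i i' : Row Empty T) (hskew : P.Skew i i') : ∃ c, (emptyPacking P 𝓕).Rel c i i' := by
    rcases i with _ | ⟨⟨⟩, _⟩
    exact hskew.elim
  simpa using (emptyPacking P 𝓕).exists_isURD hG hodd hR

theorem exists_isURD_succ_mul {n : ℕ} (hn : 1 < n) (hodd : Odd n) (k : ℕ) :
    ∃ s, IsURD n ((n + 1) * (2 + k * n)) 1 s := by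
  have : NeZero n := ⟨by lia⟩
  have : Fact (1 < n) := ⟨hn⟩
  obtain ⟨𝓕⟩ := exists_oneFactorization hodd
  have hG : Nat.card (Option (ZMod n)) = n + 1 := by simp
  have hT : Nat.card (ZMod n) = n := Nat.card_zmod n
  have hTodd : Odd (Nat.card (ZMod n)) := hT.symm ▸ hodd
  obtain ⟨h, rfl | rfl⟩ := Nat.even_or_odd' k
  · rcases eq_or_ne h 0 with rfl | hh
    · simpa using exists_isURD_of_isEmpty hG hTodd 𝓕
    · simpa [hT] using exists_isURD_of_even hG hTodd (hT.symm ▸ hn) 𝓕 hh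
  · have hshift (t : ZMod n) : Equiv.addRight 1 t ≠ t := by simp
    have ε : Bool ↪ ZMod n := ⟨fun e => if e then 1 else 0, Bool.injective_iff.2 (by simp)⟩
    simpa [hT] using exists_isURD_of_odd hG hTodd 𝓕 hshift ε h

end Existence

/-- Main Theorem: for odd `n > 1`, a `(K_2, K_{1,n})`-URD`(v; 1, s)` exists for some
positive integer `s` if and only if `v ≡ 2(n+1) (mod n(n+1))`. -/
theorem main_theorem (n : ℕ) (hn : 1 < n) (hodd : Odd n) (v : ℕ) (hv : 0 < v) :
    (∃ s : ℕ, 0 < s ∧ IsURD n v 1 s) ↔ v ≡ 2 * (n + 1) [MOD n * (n + 1)] := by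
  constructor
  · rintro ⟨s, hs, h⟩
    exact h.modEq hv hs
  · intro h
    have hn3 : 3 ≤ n := by grind
    have hlt : 2 * (n + 1) < n * (n + 1) := by nlinarith
    have hle : 2 * (n + 1) ≤ v := by
      rw [← Nat.mod_eq_of_lt hlt, ← h]
      exact Nat.mod_le _ _
    obtain ⟨k, hk⟩ := (Nat.modEq_iff_dvd' hle).1 h.symm
    obtain rfl : v = (n + 1) * (2 + k * n) := by
      rw [← Nat.sub_add_cancel hle, hk]
      ring
    obtain ⟨s, hs⟩ := exists_isURD_succ_mul hn hodd k
    refine ⟨s, Nat.pos_of_ne_zero ?_, hs⟩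
    rintro rfl
    have hcount := hs.succ_mul_eq hv
    nlinarith
end

section
/- Let n = 2q+1 > 1 be odd, let k ≥ q+1 be an integer, let g = 2nk+n+2, and let μ = (2nk+n+1)/2. There exists an almost n-star factor on Z_g admitting an admissible pure/prime labeling such that: every difference d ∈ {1,…,μ} is realized by its pure edge, which is a forward edge; every difference d ∈ {1,…,μ} is realized by at most two edges of the factor; exactly one star is a mixed star, and it has q+1 pure edges and q prime edges, all of whose prime edges are forward edges; and the little star has t−1 leaves, where t is the unique integer with 0 ≤ t ≤ n and t ≡ g (mod n+1). -/
/-- The "span" of an edge on `Z_g = {0, 1, …, g-1}`: for `e = {u, v}` with `u < v`,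
this is `v - u`. -/
def pairSpan (g : ℕ) : Sym2 (Fin g) → ℕ :=
  Sym2.lift ⟨fun u v => max u.val v.val - min u.val v.val, by
    intro u v
    simp [Nat.max_comm, Nat.min_comm]⟩

/-- The difference (length) of an edge `e = {u, v}` with `u < v` on `Z_g`:
`D(e) = min (v - u) (g - (v - u))`. -/
def pairDiff (g : ℕ) (e : Sym2 (Fin g)) : ℕ :=
  min (pairSpan g e) (g - pairSpan g e)

/-- `e = {u, v}` with `u < v` is a forward edge when `D(e) = v - u`. -/
def IsForwardEdge (g : ℕ) (e : Sym2 (Fin g)) : Prop :=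
  pairDiff g e = pairSpan g e

/-- `e = {u, v}` with `u < v` is a backward (wrap-around) edge when
`D(e) = g - (v - u)`. -/
def IsBackwardEdge (g : ℕ) (e : Sym2 (Fin g)) : Prop :=
  pairDiff g e = g - pairSpan g e

instance (g : ℕ) : DecidablePred (IsForwardEdge g) :=
  fun e => inferInstanceAs (Decidable (pairDiff g e = pairSpan g e))

instance (g : ℕ) : DecidablePred (IsBackwardEdge g) :=
  fun e => inferInstanceAs (Decidable (pairDiff g e = g - pairSpan g e))

/-- The edge set of a collection of stars, each given by a center and a leaf set. -/
def factorEdges (g : ℕ) (P : Finset (Fin g × Finset (Fin g))) : Finset (Sym2 (Fin g)) :=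
  P.biUnion starEdgeSet

/-- An almost `n`-star factor on `Z_g` (with parameter `t ≡ g (mod n+1)`, `0 ≤ t ≤ n`):
a collection of vertex-disjoint stars whose vertex sets partition `Z_g`, all of which
are `n`-stars except, when `t ≥ 1`, for one little star with `t - 1` leaves. -/
def IsAlmostStarFactor (n g t : ℕ) (P : Finset (Fin g × Finset (Fin g))) : Prop :=
  (∀ p ∈ P, p.1 ∉ p.2) ∧
  (∀ x : Fin g, ∃! p, p ∈ P ∧ (x = p.1 ∨ x ∈ p.2)) ∧
  (if t = 0 then ∀ p ∈ P, p.2.card = n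
   else ∃ L ∈ P, L.2.card = t - 1 ∧ ∀ p ∈ P, p ≠ L → p.2.card = n)

/-- An admissible pure/prime labeling of the edge set `E` of an almost star factor,
given by the subset `Pure ⊆ E` of pure edges (the rest are prime): every difference
realized by `E` is realized by exactly one pure edge and at most one prime edge. -/
def IsAdmissibleLabeling (g : ℕ) (E Pure : Finset (Sym2 (Fin g))) : Prop :=
  Pure ⊆ E ∧
  ∀ d : ℕ, (∃ e ∈ E, pairDiff g e = d) →
    (Pure.filter (fun e => pairDiff g e = d)).card = 1 ∧
    ((E \ Pure).filter (fun e => pairDiff g e = d)).card ≤ 1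

/-- A star is mixed (w.r.t. the set `Pure` of pure edges) if it contains both a pure
edge and a prime edge. -/
def IsMixedStar (g : ℕ) (Pure : Finset (Sym2 (Fin g)))
    (p : Fin g × Finset (Fin g)) : Prop :=
  (starEdgeSet p ∩ Pure).Nonempty ∧ (starEdgeSet p \ Pure).Nonempty

/-!
The factor is a bijection from the disjoint union of the vertex sets of its stars onto
`Z_{2μ+1}`. Two counting arguments replace injectivity checks. There are exactly `2μ + 1` vertices,
so it suffices that every position is occupied; and there are exactly `μ` pure edges, so it suffices
that every `d ∈ {1, …, μ}` is the span of some pure edge, which is then unique, and forward because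
`2 d ≤ 2μ + 1`.

Here `μ = kn + q + 1`. The pure edges of the mixed star have the spans `1, …, q + 1`. Those of the
`k` pure stars have the spans `q + 2 + e + kj` with `e < k` and `j < n`: even `e` come from stars
centered below a common block of `kn` leaves, odd `e` from stars centered above it.

Write `2qk = (n + 1) r + τ` with `τ = t - 1`, so that `(n + 1) r + τ + k = kn`. The `v`-th prime
star has the differences `(n + 1) v + 1, …, (n + 1) v + n`, at most `(n + 1) r`; those of the little
star's `τ` edges lie between `(n + 1) r` and `kn`; those of the `q` prime edges of the mixed star
exceed `kn`. Hence no prime difference repeats.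
-/

open Finset

theorem injective_and_forall_mem_of_card_le {α β : Type*} [Fintype α] {f : α → β} {s : Finset β}
    (hcard : Fintype.card α ≤ #s) (hs : ∀ b ∈ s, ∃ a, f a = b) :
    f.Injective ∧ ∀ a, f a ∈ s := by
  classical
  have hsub : s ⊆ univ.image f := fun b hb => by simpa using hs b hb
  have hle : #(univ.image f) ≤ #s := card_image_le.trans hcard
  have himage : s = univ.image f := eq_of_subset_of_card_le hsub hle
  refine ⟨?_, fun a => himage ▸ mem_image_of_mem f (mem_univ a)⟩
  have hcard_image : #(univ.image f) = #(univ : Finset α) :=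
    le_antisymm card_image_le (himage ▸ hcard)
  simpa using card_image_iff.1 hcard_image

theorem exists_add_mul_eq_of_lt_mul {k n x : ℕ} (hx : x < k * n) :
    ∃ i < k, ∃ j < n, i + k * j = x :=
  ⟨x % k, Nat.mod_lt _ (Nat.pos_of_lt_mul_right hx), x / k, Nat.div_lt_of_lt_mul hx,
    Nat.mod_add_div x k⟩

section Differences

variable {g μ : ℕ}

theorem isForwardEdge_of_two_mul_pairSpan_le {e : Sym2 (Fin g)} (he : 2 * pairSpan g e ≤ g) :
    IsForwardEdge g e := by
  unfold IsForwardEdge pairDiff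
  omega

theorem pairDiff_mem_Icc {e : Sym2 (Fin (2 * μ + 1))} (he : ¬e.IsDiag) :
    pairDiff (2 * μ + 1) e ∈ Icc 1 μ := by
  induction e with | h u v => ?_
  rw [Sym2.mk_isDiag_iff, Fin.ext_iff] at he
  change min (max u.val v.val - min u.val v.val)
    (2 * μ + 1 - (max u.val v.val - min u.val v.val)) ∈ _
  rw [mem_Icc]
  omega

theorem IsAdmissibleLabeling.card_filter_le_two {E Pure : Finset (Sym2 (Fin g))}
    (h : IsAdmissibleLabeling g E Pure) (d : ℕ) : #{e ∈ E | pairDiff g e = d} ≤ 2 := by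
  by_cases hd : ∃ e ∈ E, pairDiff g e = d
  · obtain ⟨hpure, hprime⟩ := h.2 d hd
    calc #{e ∈ E | pairDiff g e = d}
        = #({e ∈ Pure | pairDiff g e = d} ∪ {e ∈ E \ Pure | pairDiff g e = d}) := by
          rw [← filter_union, union_sdiff_of_subset h.1]
      _ ≤ #{e ∈ Pure | pairDiff g e = d} + #{e ∈ E \ Pure | pairDiff g e = d} :=
          card_union_le _ _
      _ ≤ 2 := by omega
  · push Not at hd
    simp [filter_false_of_mem hd]

end Differences

/-- A partition of `V` into stars indexed by `ι`, encoded as a bijection with the disjoint union of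
the vertex sets of the stars: `⟨i, none⟩` is the center of the `i`-th star and `⟨i, some l⟩`, for
`l : L i`, are its leaves. -/
abbrev StarDecomposition (V : Type*) {ι : Type*} (L : ι → Type*) : Type _ :=
  (Σ i, Option (L i)) ≃ V

namespace StarDecomposition

section Stars

variable {V ι : Type*} {L : ι → Type*} (φ : StarDecomposition V L)

/-- The edge joining a leaf to the center of its star. -/
def edge (x : Σ i, L i) : Sym2 V := s(φ ⟨x.1, none⟩, φ ⟨x.1, some x.2⟩)

theorem edge_injective : φ.edge.Injective := by
  rintro ⟨i, l⟩ ⟨i', l'⟩ h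
  simp only [edge, Sym2.eq_iff, φ.injective.eq_iff] at h
  aesop

theorem not_isDiag_edge (x : Σ i, L i) : ¬(φ.edge x).IsDiag := by
  simp [edge, φ.injective.eq_iff]

variable [DecidableEq V] [∀ i, Fintype (L i)]

/-- The `i`-th star as a pair of a center and a leaf set, the encoding used for star factors. -/
def star (i : ι) : V × Finset V := (φ ⟨i, none⟩, univ.image fun l => φ ⟨i, some l⟩)

theorem fst_star_notMem_snd (i : ι) : (φ.star i).1 ∉ (φ.star i).2 := by
  simp [star, φ.injective.eq_iff]

theorem mem_star_iff {i : ι} {v : V} :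
    v = (φ.star i).1 ∨ v ∈ (φ.star i).2 ↔ (φ.symm v).1 = i := by
  obtain ⟨⟨j, o⟩, rfl⟩ := φ.surjective v
  cases o <;> simp [star, φ.injective.eq_iff] <;> aesop

theorem card_snd_star (i : ι) : #(φ.star i).2 = Fintype.card (L i) :=
  card_image_of_injective _ fun _ _ h => by simpa using φ.injective h

theorem starEdgeSet_star (i : ι) :
    starEdgeSet (φ.star i) = univ.image fun l => φ.edge ⟨i, l⟩ := by
  simp [starEdgeSet, star, edge, image_image, Function.comp_def]

variable [Fintype ι]

/-- The collection of all stars of the decomposition. -/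
def stars : Finset (V × Finset V) := univ.image φ.star

theorem existsUnique_mem_stars (v : V) :
    ∃! p, p ∈ φ.stars ∧ (v = p.1 ∨ v ∈ p.2) := by
  refine ⟨φ.star (φ.symm v).1, ⟨mem_image_of_mem _ (mem_univ _), φ.mem_star_iff.2 rfl⟩, ?_⟩
  rintro p ⟨hp, hv⟩
  obtain ⟨i, -, rfl⟩ := mem_image.1 hp
  rw [φ.mem_star_iff.1 hv]

end Stars

section AlmostStarFactor

variable {g : ℕ} {ι : Type*} [Fintype ι] {L : ι → Type*} [∀ i, Fintype (L i)]
  (φ : StarDecomposition (Fin g) L)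

theorem factorEdges_stars : factorEdges g φ.stars = univ.image φ.edge := by
  ext e
  simp [factorEdges, stars, starEdgeSet_star, Sigma.exists]

theorem isAlmostStarFactor_stars {n t : ℕ} (ht : t ≠ 0) (i₀ : ι)
    (hlittle : Fintype.card (L i₀) = t - 1) (hbig : ∀ i, i ≠ i₀ → Fintype.card (L i) = n) :
    IsAlmostStarFactor n g t φ.stars := by
  refine ⟨?_, φ.existsUnique_mem_stars, ?_⟩
  · simpa [stars] using φ.fst_star_notMem_snd
  · rw [if_neg ht]
    refine ⟨φ.star i₀, mem_image_of_mem _ (mem_univ _), (φ.card_snd_star i₀).trans hlittle, ?_⟩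
    intro p hp hne
    obtain ⟨i, -, rfl⟩ := mem_image.1 hp
    exact (φ.card_snd_star i).trans (hbig i fun h => hne (congrArg φ.star h))

end AlmostStarFactor

section Labeling

variable {V ι : Type*} {A B : ι → Type*}
  (φ : StarDecomposition V fun i => A i ⊕ B i)

/-- When the leaves of the `i`-th star are `A i ⊕ B i`, the summand `A i` labels its pure edges. -/
def pureEdge (x : Σ i, A i) : Sym2 V := φ.edge ⟨x.1, .inl x.2⟩

/-- When the leaves of the `i`-th star are `A i ⊕ B i`, the summand `B i` labels its prime edges. -/
def primeEdge (y : Σ i, B i) : Sym2 V := φ.edge ⟨y.1, .inr y.2⟩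

theorem pureEdge_injective : φ.pureEdge.Injective := by
  rintro ⟨i, j⟩ ⟨i', j'⟩ h
  have := φ.edge_injective h
  aesop

theorem primeEdge_injective : φ.primeEdge.Injective := by
  rintro ⟨i, j⟩ ⟨i', j'⟩ h
  have := φ.edge_injective h
  aesop

theorem pureEdge_ne_primeEdge (x : Σ i, A i) (y : Σ i, B i) : φ.pureEdge x ≠ φ.primeEdge y := by
  intro h
  have := φ.edge_injective h
  aesop

variable [DecidableEq V] [∀ i, Fintype (A i)]

/-- The set of pure edges of the decomposition, encoding its pure/prime labeling. -/
def pureEdges [Fintype ι] : Finset (Sym2 V) := univ.image φ.pureEdge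

variable [∀ i, Fintype (B i)]

theorem starEdgeSet_star_eq_union (i : ι) :
    starEdgeSet (φ.star i) =
      (univ.image fun j => φ.pureEdge ⟨i, j⟩) ∪ univ.image fun j => φ.primeEdge ⟨i, j⟩ := by
  ext e
  simp [starEdgeSet_star, pureEdge, primeEdge]

variable [Fintype ι]

theorem starEdgeSet_star_inter_pureEdges (i : ι) :
    starEdgeSet (φ.star i) ∩ φ.pureEdges = univ.image fun j => φ.pureEdge ⟨i, j⟩ := by
  ext e
  have := φ.pureEdge_ne_primeEdge
  simp only [starEdgeSet_star_eq_union, pureEdges, mem_inter, mem_union, mem_image, mem_univ,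
    true_and]
  grind

theorem starEdgeSet_star_sdiff_pureEdges (i : ι) :
    starEdgeSet (φ.star i) \ φ.pureEdges = univ.image fun j => φ.primeEdge ⟨i, j⟩ := by
  ext e
  have := φ.pureEdge_ne_primeEdge
  simp only [starEdgeSet_star_eq_union, pureEdges, mem_sdiff, mem_union, mem_image, mem_univ,
    true_and]
  grind

theorem card_starEdgeSet_star_inter_pureEdges (i : ι) :
    #(starEdgeSet (φ.star i) ∩ φ.pureEdges) = Fintype.card (A i) := by
  rw [starEdgeSet_star_inter_pureEdges]
  exact card_image_of_injective _ (φ.pureEdge_injective.comp sigma_mk_injective)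

theorem card_starEdgeSet_star_sdiff_pureEdges (i : ι) :
    #(starEdgeSet (φ.star i) \ φ.pureEdges) = Fintype.card (B i) := by
  rw [starEdgeSet_star_sdiff_pureEdges]
  exact card_image_of_injective _ (φ.primeEdge_injective.comp sigma_mk_injective)

end Labeling

section AdmissibleLabeling

variable {g μ : ℕ} {ι : Type*} [Fintype ι] {A B : ι → Type*} [∀ i, Fintype (A i)]

section ForwardEdges

variable (φ : StarDecomposition (Fin (2 * μ + 1)) fun i => A i ⊕ B i)

theorem injective_pairDiff_pureEdge (hcard : Fintype.card (Σ i, A i) = μ)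
    (hspan : ∀ d ∈ Icc 1 μ, ∃ x, pairSpan (2 * μ + 1) (φ.pureEdge x) = d) :
    Function.Injective fun x => pairDiff (2 * μ + 1) (φ.pureEdge x) := by
  obtain ⟨hinj, hmem⟩ := injective_and_forall_mem_of_card_le (by simp [hcard]) hspan
  have hforward (x : Σ i, A i) : pairDiff (2 * μ + 1) (φ.pureEdge x) = pairSpan _ (φ.pureEdge x) :=
    isForwardEdge_of_two_mul_pairSpan_le (by have := mem_Icc.1 (hmem x); omega)
  simpa only [hforward] using hinj

theorem exists_isForwardEdge_mem_pureEdges {d : ℕ}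
    (hspan : ∃ x, pairSpan (2 * μ + 1) (φ.pureEdge x) = d) (hd : d ≤ μ) :
    ∃ e ∈ φ.pureEdges, pairDiff (2 * μ + 1) e = d ∧ IsForwardEdge (2 * μ + 1) e := by
  obtain ⟨x, rfl⟩ := hspan
  have hforward : IsForwardEdge (2 * μ + 1) (φ.pureEdge x) :=
    isForwardEdge_of_two_mul_pairSpan_le (by omega)
  exact ⟨_, mem_image_of_mem _ (mem_univ x), hforward, hforward⟩

end ForwardEdges

variable [∀ i, Fintype (B i)]

section MixedStars

variable (φ : StarDecomposition (Fin g) fun i => A i ⊕ B i)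

theorem isMixedStar_star_iff {i : ι} :
    IsMixedStar g φ.pureEdges (φ.star i) ↔ Nonempty (A i) ∧ Nonempty (B i) := by
  simp [IsMixedStar, starEdgeSet_star_inter_pureEdges, starEdgeSet_star_sdiff_pureEdges,
    univ_nonempty_iff]

theorem eq_star_of_isMixedStar {i₀ : ι} (h : ∀ i, Nonempty (A i) ∧ Nonempty (B i) ↔ i = i₀)
    {p : Fin g × Finset (Fin g)} (hp : p ∈ φ.stars) (hmixed : IsMixedStar g φ.pureEdges p) :
    p = φ.star i₀ := by
  obtain ⟨i, -, rfl⟩ := mem_image.1 hp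
  rw [(h i).1 (φ.isMixedStar_star_iff.1 hmixed)]

theorem existsUnique_isMixedStar {i₀ : ι} (h : ∀ i, Nonempty (A i) ∧ Nonempty (B i) ↔ i = i₀) :
    ∃! p, p ∈ φ.stars ∧ IsMixedStar g φ.pureEdges p :=
  ⟨φ.star i₀, ⟨mem_image_of_mem _ (mem_univ _), φ.isMixedStar_star_iff.2 ((h i₀).2 rfl)⟩,
    fun _ hp => φ.eq_star_of_isMixedStar h hp.1 hp.2⟩

theorem pureEdges_subset_factorEdges : φ.pureEdges ⊆ factorEdges g φ.stars := by
  rw [factorEdges_stars]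
  exact image_subset_iff.2 fun x _ => mem_image.2 ⟨⟨x.1, .inl x.2⟩, mem_univ _, rfl⟩

theorem factorEdges_stars_sdiff_pureEdges :
    factorEdges g φ.stars \ φ.pureEdges = univ.image φ.primeEdge := by
  ext e
  have hstar (i : ι) :
      e ∈ starEdgeSet (φ.star i) ∧ e ∉ φ.pureEdges ↔ ∃ j, φ.primeEdge ⟨i, j⟩ = e := by
    simp [← mem_sdiff, starEdgeSet_star_sdiff_pureEdges]
  simp only [factorEdges, stars, image_biUnion, mem_sdiff, mem_biUnion, mem_univ, true_and,
    ← exists_and_right, hstar, mem_image, Sigma.exists]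

end MixedStars

variable (φ : StarDecomposition (Fin (2 * μ + 1)) fun i => A i ⊕ B i)

theorem isAdmissibleLabeling_pureEdges (hcard : Fintype.card (Σ i, A i) = μ)
    (hspan : ∀ d ∈ Icc 1 μ, ∃ x, pairSpan (2 * μ + 1) (φ.pureEdge x) = d)
    (hprime : Function.Injective fun y => pairDiff (2 * μ + 1) (φ.primeEdge y)) :
    IsAdmissibleLabeling (2 * μ + 1) (factorEdges (2 * μ + 1) φ.stars) φ.pureEdges := by
  have hpure := φ.injective_pairDiff_pureEdge hcard hspan
  refine ⟨φ.pureEdges_subset_factorEdges, ?_⟩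
  rintro d ⟨e, he, rfl⟩
  obtain ⟨z, -, rfl⟩ := mem_image.1 (φ.factorEdges_stars ▸ he)
  have hd := pairDiff_mem_Icc (φ.not_isDiag_edge z)
  constructor
  · obtain ⟨e, he, hed, -⟩ :=
      φ.exists_isForwardEdge_mem_pureEdges (hspan _ hd) (mem_Icc.1 hd).2
    refine le_antisymm ?_ (card_pos.2 ⟨e, mem_filter.2 ⟨he, hed⟩⟩)
    rw [pureEdges, filter_image]
    refine card_image_le.trans (card_le_one.2 fun x hx y hy => hpure ?_)
    exact (mem_filter.1 hx).2.trans (mem_filter.1 hy).2.symm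
  · rw [factorEdges_stars_sdiff_pureEdges, filter_image]
    refine card_image_le.trans (card_le_one.2 fun x hx y hy => hprime ?_)
    exact (mem_filter.1 hx).2.trans (mem_filter.1 hy).2.symm

end AdmissibleLabeling

end StarDecomposition

/-- The index set of the stars: `low` and `high` consist of the `n`-stars with pure edges only,
whose centers lie below resp. above their leaves, `mixed` and `little` are the mixed star and the
little star, and `short` consists of the `n`-stars with prime edges only. -/
inductive StarIndex (k r : ℕ)
  | low (i : Fin ((k + 1) / 2))
  | high (i : Fin (k / 2))
  | mixed
  | little
  | short (v : Fin r)

namespace StarIndex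

variable {k r : ℕ}

/-- The constructors of `StarIndex` as the summands of a sum type. -/
def equivSum : StarIndex k r ≃ (Fin ((k + 1) / 2) ⊕ Fin (k / 2)) ⊕ (Bool ⊕ Fin r) where
  toFun
    | low i => .inl (.inl i)
    | high i => .inl (.inr i)
    | mixed => .inr (.inl true)
    | little => .inr (.inl false)
    | short v => .inr (.inr v)
  invFun
    | .inl (.inl i) => low i
    | .inl (.inr i) => high i
    | .inr (.inl true) => mixed
    | .inr (.inl false) => little
    | .inr (.inr v) => short v
  left_inv := by rintro (_ | _ | _ | _ | _) <;> rfl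
  right_inv := by rintro ((_ | _) | (_ | _) | _) <;> rfl

instance : Fintype (StarIndex k r) := .ofEquiv _ equivSum.symm

theorem sum_univ (f : StarIndex k r → ℕ) :
    ∑ i, f i =
      ((∑ i, f (low i)) + ∑ i, f (high i)) + ((f mixed + f little) + ∑ v, f (short v)) := by
  rw [← equivSum.symm.sum_comp]
  simp [Fintype.sum_sum_type, equivSum]

/-- The number of pure edges of each star. -/
def pureCount (q : ℕ) : StarIndex k r → ℕ
  | low _ | high _ => 2 * q + 1
  | mixed => q + 1
  | little | short _ => 0

/-- The number of prime edges of each star, where the little star has `τ` leaves. -/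
def primeCount (q τ : ℕ) : StarIndex k r → ℕ
  | low _ | high _ => 0
  | mixed => q
  | little => τ
  | short _ => 2 * q + 1

/-- The center of each star in `Z_{2μ+1}`. -/
def center (q μ τ : ℕ) : StarIndex k r → ℕ
  | low i => (k + 1) / 2 - 1 - i
  | high i => (k + 1) / 2 + μ + q + 2 + i
  | mixed => (k + 1) / 2 + μ
  | little => (k + 1) / 2
  | short v => k + μ + q + 2 + τ + (r - 1 - v)

/-- The pure leaves `pureLeaf q μ i j`, `j < pureCount q i`, of each star. The value `0` for stars
without pure leaves is junk. -/
def pureLeaf (q μ : ℕ) : StarIndex k r → ℕ → ℕ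
  | low i, j => (k + 1) / 2 + q + 1 + i + k * j
  | high i, j => (k + 1) / 2 + μ - 1 - i - k * j
  | mixed, j => (k + 1) / 2 + μ + 1 + j
  | little, _ | short _, _ => 0

/-- The prime leaves `primeLeaf q μ τ i j`, `j < primeCount q τ i`, of each star. The value `0` for
stars without prime leaves is junk. -/
def primeLeaf (q μ τ : ℕ) : StarIndex k r → ℕ → ℕ
  | low _, _ | high _, _ => 0
  | mixed, j => (k + 1) / 2 + 1 + j
  | little, j => k + μ + q + 2 + j
  | short v, j => k + μ + q + 2 + τ + r + j + (2 * q + 1) * v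

/-- The pure leaves followed by the prime leaves of a star, as an index type. -/
abbrev Leaf (q τ : ℕ) (i : StarIndex k r) : Type :=
  Fin (pureCount q i) ⊕ Fin (primeCount q τ i)

/-- The position in `Z_{2μ+1}` of the centers and leaves of all stars. -/
def position (q μ τ : ℕ) : (Σ i : StarIndex k r, Option (Leaf q τ i)) → ℕ
  | ⟨i, none⟩ => center q μ τ i
  | ⟨i, some (.inl j)⟩ => pureLeaf q μ i j
  | ⟨i, some (.inr j)⟩ => primeLeaf q μ τ i j

variable {q μ τ : ℕ}

theorem card_sigma_pureCount (hμ : μ = k * (2 * q + 1) + q + 1) :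
    Fintype.card (Σ i : StarIndex k r, Fin (pureCount q i)) = μ := by
  calc Fintype.card (Σ i : StarIndex k r, Fin (pureCount q i))
      = ∑ i : StarIndex k r, pureCount q i := by simp
    _ = ((k + 1) / 2 + k / 2) * (2 * q + 1) + q + 1 := by
        simp only [sum_univ, pureCount, sum_const, card_univ, Fintype.card_fin, smul_eq_mul]
        ring
    _ = μ := by rw [hμ, show (k + 1) / 2 + k / 2 = k by omega]

theorem card_sigma_option_leaf (hμ : μ = k * (2 * q + 1) + q + 1)
    (hr : 2 * q * k = (2 * q + 2) * r + τ) :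
    Fintype.card (Σ i : StarIndex k r, Option (Leaf q τ i)) = 2 * μ + 1 := by
  calc Fintype.card (Σ i : StarIndex k r, Option (Leaf q τ i))
      = ∑ i : StarIndex k r, (pureCount q i + primeCount q τ i + 1) := by simp
    _ = ((k + 1) / 2 + k / 2 + r + 1) * (2 * q + 2) + τ + 1 := by
        simp only [sum_univ, pureCount, primeCount, sum_const, card_univ, Fintype.card_fin,
          smul_eq_mul]
        ring
    _ = 2 * μ + 1 := by rw [hμ, show (k + 1) / 2 + k / 2 = k by omega]; linarith

theorem exists_position_eq_of_mem_pure_block (hμ : μ = k * (2 * q + 1) + q + 1) {y : ℕ}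
    (hy : y < k * (2 * q + 1)) :
    ∃ v, position (k := k) (r := r) q μ τ v = (k + 1) / 2 + q + 1 + y := by
  obtain ⟨e, he, j, hj, rfl⟩ := exists_add_mul_eq_of_lt_mul hy
  by_cases hlow : e < (k + 1) / 2
  · exact ⟨⟨low ⟨e, hlow⟩, some (.inl ⟨j, hj⟩)⟩, add_assoc _ e _⟩
  · have hrev : k * (2 * q - j) + k * j + k = k * (2 * q + 1) := by
      rw [← mul_add, Nat.sub_add_cancel (by omega), mul_add_one]
    have hj' : 2 * q - j < pureCount q (high ⟨k - 1 - e, by omega⟩ : StarIndex k r) := by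
      simp only [pureCount]
      omega
    refine ⟨⟨_, some (.inl ⟨2 * q - j, hj'⟩)⟩, ?_⟩
    simp only [position, pureLeaf]
    omega

theorem exists_position_eq_of_mem_prime_block {y : ℕ} (hy : y < (2 * q + 1) * r) :
    ∃ v, position (k := k) (r := r) q μ τ v = k + μ + q + 2 + τ + r + y := by
  obtain ⟨j, hj, v, hv, rfl⟩ := exists_add_mul_eq_of_lt_mul hy
  exact ⟨⟨short ⟨v, hv⟩, some (.inr ⟨j, hj⟩)⟩, by simp only [position, primeLeaf]; omega⟩

theorem exists_position_eq (hμ : μ = k * (2 * q + 1) + q + 1)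
    (hr : 2 * q * k = (2 * q + 2) * r + τ) {x : ℕ} (hx : x < 2 * μ + 1) :
    ∃ v, position (k := k) (r := r) q μ τ v = x := by
  have hend : 2 * μ + 1 = k + μ + q + 2 + τ + r + (2 * q + 1) * r := by rw [hμ]; linarith
  obtain h | rfl | h | h | rfl | h | h | h | h | h :
      x < (k + 1) / 2 ∨ x = (k + 1) / 2 ∨
      ((k + 1) / 2 < x ∧ x ≤ (k + 1) / 2 + q) ∨ ((k + 1) / 2 + q < x ∧ x < (k + 1) / 2 + μ) ∨
      x = (k + 1) / 2 + μ ∨ ((k + 1) / 2 + μ < x ∧ x < (k + 1) / 2 + μ + q + 2) ∨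
      ((k + 1) / 2 + μ + q + 2 ≤ x ∧ x < k + μ + q + 2) ∨
      (k + μ + q + 2 ≤ x ∧ x < k + μ + q + 2 + τ) ∨
      (k + μ + q + 2 + τ ≤ x ∧ x < k + μ + q + 2 + τ + r) ∨ k + μ + q + 2 + τ + r ≤ x := by
    omega
  · exact ⟨⟨low ⟨(k + 1) / 2 - 1 - x, by omega⟩, none⟩, by simp only [position, center]; omega⟩
  · exact ⟨⟨little, none⟩, rfl⟩
  · exact ⟨⟨mixed, some (.inr ⟨x - (k + 1) / 2 - 1, by simp only [primeCount]; omega⟩)⟩,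
      by simp only [position, primeLeaf]; omega⟩
  · obtain ⟨y, rfl⟩ := Nat.exists_eq_add_of_le h.1
    exact exists_position_eq_of_mem_pure_block hμ (by omega)
  · exact ⟨⟨mixed, none⟩, rfl⟩
  · exact ⟨⟨mixed, some (.inl ⟨x - (k + 1) / 2 - μ - 1, by simp only [pureCount]; omega⟩)⟩,
      by simp only [position, pureLeaf]; omega⟩
  · exact ⟨⟨high ⟨x - ((k + 1) / 2 + μ + q + 2), by omega⟩, none⟩,
      by simp only [position, center]; omega⟩
  · exact ⟨⟨little, some (.inr ⟨x - (k + μ + q + 2), by simp only [primeCount]; omega⟩)⟩,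
      by simp only [position, primeLeaf]; omega⟩
  · exact ⟨⟨short ⟨r - 1 - (x - (k + μ + q + 2 + τ)), by omega⟩, none⟩,
      by simp only [position, center]; omega⟩
  · obtain ⟨y, rfl⟩ := Nat.exists_eq_add_of_le h
    exact exists_position_eq_of_mem_prime_block (by omega)

theorem exists_starDecomposition (hμ : μ = k * (2 * q + 1) + q + 1)
    (hr : 2 * q * k = (2 * q + 2) * r + τ) :
    ∃ φ : StarDecomposition (Fin (2 * μ + 1)) (Leaf (k := k) (r := r) q τ),
      ∀ v, (φ v : ℕ) = position q μ τ v := by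
  have hcard := card_sigma_option_leaf hμ hr
  obtain ⟨hinj, hlt⟩ := injective_and_forall_mem_of_card_le (s := range (2 * μ + 1))
    (by rw [hcard, card_range]) fun x hx => exists_position_eq hμ hr (mem_range.1 hx)
  let f (v : Σ i : StarIndex k r, Option (Leaf q τ i)) : Fin (2 * μ + 1) :=
    ⟨position q μ τ v, mem_range.1 (hlt v)⟩
  have hf : f.Bijective := (Fintype.bijective_iff_injective_and_card f).2
    ⟨fun _ _ h => hinj (congrArg Fin.val h), hcard.trans (Fintype.card_fin _).symm⟩
  exact ⟨.ofBijective f hf, fun _ => rfl⟩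

/-- The difference of the prime edge at the leaf `primeLeaf q μ τ i j`. The value `0` for stars
without prime edges is junk. -/
def primeDiff (q : ℕ) : StarIndex k r → ℕ → ℕ
  | low _, _ | high _, _ => 0
  | mixed, j => k * (2 * q + 1) + q - j
  | little, j => k * (2 * q + 1) - k / 2 - j
  | short v, j => j + (2 * q + 2) * v + 1

theorem primeDiff_short_le (v : Fin r) (j : Fin (2 * q + 1)) :
    primeDiff q (short v : StarIndex k r) j ≤ (2 * q + 2) * r := by
  have hv : (2 * q + 2) * v + (2 * q + 2) ≤ (2 * q + 2) * r := Nat.mul_le_mul_left _ v.isLt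
  simp only [primeDiff]
  omega

theorem primeDiff_little_mem_Ioc (hr : 2 * q * k = (2 * q + 2) * r + τ) (j : Fin τ) :
    primeDiff q (little : StarIndex k r) j ∈ Ioc ((2 * q + 2) * r) (k * (2 * q + 1)) := by
  have hkn : k * (2 * q + 1) = (2 * q + 2) * r + τ + k := by linarith
  simp only [primeDiff, mem_Ioc]
  omega

theorem lt_primeDiff_mixed (j : Fin q) :
    k * (2 * q + 1) < primeDiff q (mixed : StarIndex k r) j := by
  simp only [primeDiff]
  omega

theorem primeDiff_short_inj {v v' : Fin r} {j j' : Fin (2 * q + 1)} :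
    primeDiff q (short v : StarIndex k r) j = primeDiff q (short v' : StarIndex k r) j' ↔
      v = v' ∧ j = j' := by
  refine ⟨fun h => ?_, by rintro ⟨rfl, rfl⟩; rfl⟩
  have hdivMod (v : Fin r) (j : Fin (2 * q + 1)) :=
    (Nat.div_mod_unique (by omega)).2 ⟨Eq.refl (j + (2 * q + 2) * v : ℕ), Nat.lt_succ_of_lt j.isLt⟩
  obtain ⟨hv, hj⟩ := hdivMod v j
  obtain ⟨hv', hj'⟩ := hdivMod v' j'
  rw [Nat.succ.inj h] at hv hj
  exact ⟨Fin.ext (hv.symm.trans hv'), Fin.ext (hj.symm.trans hj')⟩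

theorem primeDiff_injective (hr : 2 * q * k = (2 * q + 2) * r + τ) :
    Function.Injective fun y : Σ i : StarIndex k r, Fin (primeCount q τ i) =>
      primeDiff q y.1 y.2 := by
  have hshort_le : (2 * q + 2) * r ≤ k * (2 * q + 1) := by linarith
  have hshort (v : Fin r) (j : Fin (2 * q + 1)) := primeDiff_short_le (k := k) v j
  have hlittle (j : Fin τ) := mem_Ioc.1 (primeDiff_little_mem_Ioc hr j)
  have hmixed (j : Fin q) := lt_primeDiff_mixed (k := k) (r := r) j
  rintro ⟨_ | _ | _ | _ | v, j⟩ ⟨_ | _ | _ | _ | v', j'⟩ h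
  all_goals first | exact j.elim0 | exact j'.elim0 | skip
  case mixed.mixed =>
    have hj' : (j' : ℕ) < q := j'.isLt
    obtain rfl : j = j' := Fin.ext (by simp only [primeDiff] at h; omega)
    rfl
  case mixed.little => exact absurd h ((hlittle j').2.trans_lt (hmixed j)).ne'
  case mixed.short =>
    exact absurd h ((hshort v' j').trans_lt (hshort_le.trans_lt (hmixed j))).ne'
  case little.mixed => exact absurd h ((hlittle j).2.trans_lt (hmixed j')).ne
  case little.little =>
    have hj := (hlittle j).1
    have hj' := (hlittle j').1
    obtain rfl : j = j' := Fin.ext (by simp only [primeDiff] at h hj hj'; omega)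
    rfl
  case little.short => exact absurd h ((hshort v' j').trans_lt (hlittle j).1).ne'
  case short.mixed =>
    exact absurd h ((hshort v j).trans_lt (hshort_le.trans_lt (hmixed j'))).ne
  case short.little => exact absurd h ((hshort v j).trans_lt (hlittle j').1).ne
  case short.short =>
    obtain ⟨rfl, rfl⟩ := primeDiff_short_inj.1 h
    rfl

section Decomposition

variable {φ : StarDecomposition (Fin (2 * μ + 1)) (Leaf (k := k) (r := r) q τ)}
  (hφ : ∀ v, (φ v : ℕ) = position q μ τ v)

include hφ

theorem pairSpan_pureEdge (i : StarIndex k r) (j : Fin (pureCount q i)) :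
    pairSpan _ (φ.pureEdge ⟨i, j⟩) =
      max (center q μ τ i) (pureLeaf q μ i j) - min (center q μ τ i) (pureLeaf q μ i j) := by
  change max (φ _ : ℕ) (φ _) - min (φ _ : ℕ) (φ _) = _
  simp only [hφ, position]

theorem pairSpan_primeEdge (i : StarIndex k r) (j : Fin (primeCount q τ i)) :
    pairSpan _ (φ.primeEdge ⟨i, j⟩) =
      max (center q μ τ i) (primeLeaf q μ τ i j) - min (center q μ τ i) (primeLeaf q μ τ i j) := by
  change max (φ _ : ℕ) (φ _) - min (φ _ : ℕ) (φ _) = _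
  simp only [hφ, position]

theorem exists_pairSpan_pureEdge_eq (hμ : μ = k * (2 * q + 1) + q + 1) {d : ℕ}
    (hd : d ∈ Icc 1 μ) : ∃ x, pairSpan _ (φ.pureEdge x) = d := by
  obtain ⟨hd₁, hdμ⟩ := mem_Icc.1 hd
  by_cases hmixed : d ≤ q + 1
  · refine ⟨⟨mixed, ⟨d - 1, by simp only [pureCount]; omega⟩⟩, ?_⟩
    simp only [pairSpan_pureEdge hφ, center, pureLeaf]
    omega
  · obtain ⟨e, he, j, hj, hoffset⟩ : ∃ e < k, ∃ j < 2 * q + 1, e + k * j = d - (q + 2) :=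
      exists_add_mul_eq_of_lt_mul (by omega)
    have hblock : k * j + k ≤ k * (2 * q + 1) := Nat.mul_succ k j ▸ Nat.mul_le_mul_left k hj
    obtain ⟨i, rfl | rfl⟩ := e.even_or_odd'
    · refine ⟨⟨low ⟨i, by omega⟩, ⟨j, hj⟩⟩, ?_⟩
      simp only [pairSpan_pureEdge hφ, center, pureLeaf]
      omega
    · refine ⟨⟨high ⟨i, by omega⟩, ⟨j, hj⟩⟩, ?_⟩
      simp only [pairSpan_pureEdge hφ, center, pureLeaf]
      omega

theorem isForwardEdge_primeEdge_mixed (j : Fin (primeCount (k := k) (r := r) q τ mixed))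
    (hμ : μ = k * (2 * q + 1) + q + 1) :
    IsForwardEdge _ (φ.primeEdge ⟨mixed, j⟩) := by
  have hj : (j : ℕ) < q := j.isLt
  apply isForwardEdge_of_two_mul_pairSpan_le
  rw [pairSpan_primeEdge hφ]
  simp only [center, primeLeaf]
  omega

theorem pairDiff_primeEdge (hμ : μ = k * (2 * q + 1) + q + 1)
    (hr : 2 * q * k = (2 * q + 2) * r + τ) (y : Σ i : StarIndex k r, Fin (primeCount q τ i)) :
    pairDiff _ (φ.primeEdge y) = primeDiff q y.1 y.2 := by
  obtain ⟨i, j⟩ := y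
  have hkn : k * (2 * q + 1) = (2 * q + 2) * r + τ + k := by linarith
  rw [pairDiff, pairSpan_primeEdge hφ]
  cases i with
  | low | high => exact j.elim0
  | mixed | little =>
    have := j.isLt
    simp only [primeCount, center, primeLeaf, primeDiff] at this ⊢
    omega
  | short v =>
    have hj := j.isLt
    have hv : (2 * q + 2) * v + (2 * q + 2) ≤ (2 * q + 2) * r := Nat.mul_le_mul_left _ v.isLt
    have hsplit : (2 * q + 2) * (v : ℕ) = (2 * q + 1) * v + v := by ring
    simp only [primeCount, center, primeLeaf, primeDiff] at hj ⊢
    omega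

end Decomposition

theorem nonempty_fin_pureCount_and_primeCount_iff (hq : q ≠ 0) (i : StarIndex k r) :
    Nonempty (Fin (pureCount q i)) ∧ Nonempty (Fin (primeCount q τ i)) ↔ i = mixed := by
  cases i <;> simp [pureCount, primeCount, ← Fin.pos_iff_nonempty, Nat.pos_iff_ne_zero, hq]

theorem card_leaf_little : Fintype.card (Leaf q τ (little : StarIndex k r)) = τ := by
  rw [Fintype.card_sum, Fintype.card_fin, Fintype.card_fin, pureCount, primeCount, zero_add]

theorem card_leaf_of_ne_little {i : StarIndex k r} (hi : i ≠ little) :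
    Fintype.card (Leaf q τ i) = 2 * q + 1 := by
  rw [Fintype.card_sum, Fintype.card_fin, Fintype.card_fin]
  cases i with
  | low | high | short => simp only [pureCount, primeCount, add_zero, zero_add]
  | mixed => simp only [pureCount, primeCount]; omega
  | little => exact absurd rfl hi

end StarIndex

theorem exists_eq_succ_of_modEq {q k t : ℕ} (ht : t ≤ 2 * q + 1)
    (hmod : t ≡ 2 * (2 * q + 1) * k + (2 * q + 1) + 2 [MOD 2 * q + 2]) :
    ∃ r τ, t = τ + 1 ∧ 2 * q * k = (2 * q + 2) * r + τ := by
  have hg : 2 * (2 * q + 1) * k + (2 * q + 1) + 2 = 2 * q * k + 1 + (2 * q + 2) * (k + 1) := by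
    ring
  rw [hg, Nat.ModEq, Nat.add_mul_mod_self_left, Nat.mod_eq_of_lt (by omega)] at hmod
  have hdiv : (2 * q + 2) * ((2 * q * k + 1) / (2 * q + 2)) + t = 2 * q * k + 1 :=
    hmod ▸ Nat.div_add_mod _ _
  have ht_odd : ¬2 ∣ t := fun h => by
    have h₁ : 2 ∣ 2 * q * k := ⟨q * k, mul_assoc 2 q k⟩
    have h₂ : 2 ∣ (2 * q + 2) * ((2 * q * k + 1) / (2 * q + 2)) :=
      (Dvd.intro (q + 1) rfl : 2 ∣ 2 * q + 2).mul_right _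
    omega
  exact ⟨(2 * q * k + 1) / (2 * q + 2), t - 1, by omega, by omega⟩

theorem almost_factor_large_k_general (n q k : ℕ) (hq : n = 2 * q + 1) (hn : 1 < n)
    (g : ℕ) (hg : g = 2 * n * k + n + 2)
    (μ : ℕ) (hμ : 2 * μ = 2 * n * k + n + 1)
    (t : ℕ) (ht1 : t ≤ n) (ht2 : t ≡ g [MOD n + 1]) :
    ∃ (P : Finset (Fin g × Finset (Fin g))) (Pure : Finset (Sym2 (Fin g))),
      IsAlmostStarFactor n g t P ∧
      IsAdmissibleLabeling g (factorEdges g P) Pure ∧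
      (∀ d, 1 ≤ d → d ≤ μ → ∃ e ∈ Pure, pairDiff g e = d ∧ IsForwardEdge g e) ∧
      (∀ d, 1 ≤ d → d ≤ μ →
        ((factorEdges g P).filter (fun e => pairDiff g e = d)).card ≤ 2) ∧
      (∃! p, p ∈ P ∧ IsMixedStar g Pure p) ∧
      (∀ p ∈ P, IsMixedStar g Pure p →
        (starEdgeSet p ∩ Pure).card = q + 1 ∧
        (starEdgeSet p \ Pure).card = q ∧
        (∀ e ∈ starEdgeSet p \ Pure, IsForwardEdge g e)) := by
  subst hq
  obtain ⟨r, τ, rfl, hr⟩ := exists_eq_succ_of_modEq ht1 (hg ▸ ht2)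
  have hμ' : μ = k * (2 * q + 1) + q + 1 := by linarith
  obtain rfl : g = 2 * μ + 1 := by omega
  obtain ⟨φ, hφ⟩ := StarIndex.exists_starDecomposition hμ' hr
  have hspan := fun d => StarIndex.exists_pairSpan_pureEdge_eq hφ hμ' (d := d)
  have hadm := φ.isAdmissibleLabeling_pureEdges (StarIndex.card_sigma_pureCount hμ') hspan
    (by simpa only [StarIndex.pairDiff_primeEdge hφ hμ' hr] using StarIndex.primeDiff_injective hr)
  have hmixed := StarIndex.nonempty_fin_pureCount_and_primeCount_iff (k := k) (r := r) (τ := τ)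
    (q := q) (by omega)
  refine ⟨φ.stars, φ.pureEdges, ?_, hadm, ?_, fun d _ _ => hadm.card_filter_le_two d,
    φ.existsUnique_isMixedStar hmixed, fun p hp hpmixed => ?_⟩
  · exact φ.isAlmostStarFactor_stars τ.succ_ne_zero .little (StarIndex.card_leaf_little)
      fun i => StarIndex.card_leaf_of_ne_little
  · exact fun d hd hdμ => φ.exists_isForwardEdge_mem_pureEdges (hspan d (mem_Icc.2 ⟨hd, hdμ⟩)) hdμ
  · obtain rfl := φ.eq_star_of_isMixedStar hmixed hp hpmixed
    refine ⟨?_, ?_, ?_⟩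
    · rw [φ.card_starEdgeSet_star_inter_pureEdges, Fintype.card_fin, StarIndex.pureCount]
    · rw [φ.card_starEdgeSet_star_sdiff_pureEdges, Fintype.card_fin, StarIndex.primeCount]
    · simpa [φ.starEdgeSet_star_sdiff_pureEdges] using
        fun j => StarIndex.isForwardEdge_primeEdge_mixed hφ j hμ'

/-- Lemma 5 (k ≥ q+1): for odd `n = 2q+1 > 1`, `g = 2nk + n + 2` and
`μ = (2nk+n+1)/2`, there is an almost `n`-star factor on `Z_g` with an admissible
pure/prime labeling such that every difference `d ∈ {1, …, μ}` is realized by its pure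
edge, which is forward, and by at most two edges overall; there is exactly one mixed
star, having `q+1` pure edges and `q` prime edges, all of which are forward; and the
little star has `t-1` leaves. -/
theorem almost_factor_large_k (n q k : ℕ) (hq : n = 2 * q + 1) (hn : 1 < n)
    (hk : q + 1 ≤ k)
    (g : ℕ) (hg : g = 2 * n * k + n + 2)
    (μ : ℕ) (hμ : 2 * μ = 2 * n * k + n + 1)
    (t : ℕ) (ht1 : t ≤ n) (ht2 : t ≡ g [MOD n + 1]) :
    ∃ (P : Finset (Fin g × Finset (Fin g))) (Pure : Finset (Sym2 (Fin g))),
      IsAlmostStarFactor n g t P ∧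
      IsAdmissibleLabeling g (factorEdges g P) Pure ∧
      (∀ d, 1 ≤ d → d ≤ μ → ∃ e ∈ Pure, pairDiff g e = d ∧ IsForwardEdge g e) ∧
      (∀ d, 1 ≤ d → d ≤ μ →
        ((factorEdges g P).filter (fun e => pairDiff g e = d)).card ≤ 2) ∧
      (∃! p, p ∈ P ∧ IsMixedStar g Pure p) ∧
      (∀ p ∈ P, IsMixedStar g Pure p →
        (starEdgeSet p ∩ Pure).card = q + 1 ∧
        (starEdgeSet p \ Pure).card = q ∧
        (∀ e ∈ starEdgeSet p \ Pure, IsForwardEdge g e)) :=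
  almost_factor_large_k_general n q k hq hn g hg μ hμ t ht1 ht2
end

section
/- Let n > 1 be odd, let k ≥ 2 be an integer, and let g = 2nk+2. There exists an almost n-star factor on Z_g such that every difference d ∈ {1,…,nk} is realized at least once by a forward edge of the factor and is realized by at most two edges of the factor, and whose little star has t−1 leaves, where t is the unique integer with 0 ≤ t ≤ n and t ≡ g (mod n+1) (there is no little star when t = 0). -/
/-!
Place the `m + M` centers, `m ≤ M ≤ m + 1`, in a block of consecutive vertices (the hub) and the
leaves on both sides of it. On each side the leaves at depth `j * n, …, j * n + n - 1` form the
`j`-th batch, whose leaves are joined to the center at depth `j - 1` or `j + 1`; the two choices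
alternate along each side and are opposite on the two sides, and they are replaced by `j` where they
would lead past the end of the side. Hence the leaves of depth `y` lie on at most one short edge, of
span `y + 1 + (y / n - 1)`, and at most one long edge, of span `y + 1 + (y / n + 1)` before the cap.
Both spans strictly increase with `y`, and a short span and a long span add up to less than `g`.
Label an edge by its span if it is short and by `g` minus its span if it is long: different edges
get different labels, and only the labels `d` and `g - d` give the difference `d`.
Short spans skip only numbers congruent to `-1` modulo `n + 1` and long spans only numbers congruent
to `1`, so together they cover every difference below `g / 2`.
-/

section FiberStars

variable {V : Type*} [Fintype V] [DecidableEq V]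

/-- The star with center `c` whose leaves are the other elements of the fiber of `F` over `c`. -/
def fiberStar (F : V → V) (c : V) : V × Finset V :=
  (c, Finset.univ.filter fun x => x ≠ c ∧ F x = c)

/-- The stars formed by the nonempty fibers of `F`. For idempotent `F` they partition `V`, each
vertex `x` lying in the star centered at `F x`. -/
def fiberStars (F : V → V) : Finset (V × Finset V) :=
  Finset.univ.image fun x => fiberStar F (F x)

theorem mem_fiberStars {F : V → V} {p : V × Finset V} :
    p ∈ fiberStars F ↔ ∃ x, fiberStar F (F x) = p := by
  simp [fiberStars]

theorem fst_notMem_snd_of_mem_fiberStars {F : V → V} {p : V × Finset V} (hp : p ∈ fiberStars F) :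
    p.1 ∉ p.2 := by
  obtain ⟨x, rfl⟩ := mem_fiberStars.1 hp
  simp [fiberStar]

theorem existsUnique_mem_fiberStars {F : V → V} (hF : ∀ x, F (F x) = F x) (x : V) :
    ∃! p, p ∈ fiberStars F ∧ (x = p.1 ∨ x ∈ p.2) := by
  refine ⟨fiberStar F (F x), ⟨mem_fiberStars.2 ⟨x, rfl⟩, ?_⟩, ?_⟩
  · by_cases h : x = F x
    · exact .inl h
    · exact .inr (by simp [fiberStar, h])
  · rintro p ⟨hp, hx⟩
    obtain ⟨y, rfl⟩ := mem_fiberStars.1 hp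
    have hxy : F x = F y := by
      rcases hx with hx | hx
      · rw [hx]
        exact hF y
      · exact (Finset.mem_filter.1 hx).2.2
    rw [hxy]

theorem mem_biUnion_starEdgeSet_fiberStars {F : V → V} {e : Sym2 V} :
    e ∈ (fiberStars F).biUnion starEdgeSet ↔ ∃ x, F x ≠ x ∧ s(F x, x) = e := by
  simp only [Finset.mem_biUnion, mem_fiberStars, starEdgeSet, Finset.mem_image]
  constructor
  · rintro ⟨_, ⟨y, rfl⟩, x, hx, rfl⟩
    obtain ⟨hne, hxy⟩ := (Finset.mem_filter.1 hx).2
    exact ⟨x, hxy ▸ hne.symm, congrArg (s(·, x)) hxy⟩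
  · rintro ⟨x, hx, rfl⟩
    exact ⟨_, ⟨x, rfl⟩, x, by simpa [fiberStar] using hx.symm, rfl⟩

theorem card_filter_factorEdges_fiberStars_le {g : ℕ} (F : Fin g → Fin g)
    (q : Sym2 (Fin g) → Prop) [DecidablePred q] :
    ((factorEdges g (fiberStars F)).filter q).card ≤
      (Finset.univ.filter fun x => F x ≠ x ∧ q s(F x, x)).card := by
  refine le_trans (Finset.card_le_card ?_) (Finset.card_image_le (f := fun x => s(F x, x)))
  intro e he
  obtain ⟨he, hq⟩ := Finset.mem_filter.1 he
  obtain ⟨x, hx, rfl⟩ := mem_biUnion_starEdgeSet_fiberStars.1 he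
  exact Finset.mem_image.2 ⟨x, Finset.mem_filter.2 ⟨Finset.mem_univ x, hx, hq⟩, rfl⟩

theorem card_fiberStar_eq_card {g : ℕ} {F : Fin g → Fin g} {c : Fin g} {s : Finset ℕ} {f : ℕ → ℕ}
    (hinj : Set.InjOn f s) (hlt : ∀ y ∈ s, f y < g)
    (hf : ∀ x : Fin g, x ≠ c ∧ F x = c ↔ ∃ y ∈ s, f y = x) :
    (fiberStar F c).2.card = s.card := by
  have himage : (fiberStar F c).2.map Fin.valEmbedding = s.image f := by
    ext z
    simp only [fiberStar, Finset.mem_map, Finset.mem_filter, Finset.mem_univ, true_and, hf,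
      Fin.valEmbedding_apply, Finset.mem_image]
    constructor
    · rintro ⟨x, hx, rfl⟩
      exact hx
    · rintro ⟨y, hy, rfl⟩
      exact ⟨⟨f y, hlt y hy⟩, ⟨y, hy, rfl⟩, rfl⟩
  rw [← Finset.card_map, himage, Finset.card_image_of_injOn hinj]

end FiberStars

section Counting

theorem card_filter_range_div_eq {n : ℕ} (hn : 0 < n) (K q : ℕ) :
    ((Finset.range K).filter fun y => y / n = q).card = min n (K - q * n) := by
  have hIco : ((Finset.range K).filter fun y => y / n = q) =
      Finset.Ico (q * n) (min K (q * n + n)) := by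
    ext y
    rw [Finset.mem_filter, Finset.mem_range, Finset.mem_Ico, Nat.div_eq_iff hn]
    omega
  rw [hIco, Nat.card_Ico]
  omega

theorem card_le_two_of_add_lt {α : Type*} {A : Finset α} {span : α → ℕ} {short : α → Prop}
    {g d : ℕ} (hle : ∀ a ∈ A, span a ≤ g) (hspan : ∀ a ∈ A, min (span a) (g - span a) = d)
    (hinj : ∀ a ∈ A, ∀ b ∈ A, (short a ↔ short b) → span a = span b → a = b)
    (hlt : ∀ a ∈ A, ∀ b ∈ A, short a → ¬ short b → span a + span b < g) : A.card ≤ 2 := by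
  classical
  let label (a : α) : ℕ := if short a then span a else g - span a
  have hmaps : ∀ a ∈ A, label a ∈ ({d, g - d} : Finset ℕ) := by
    intro a ha
    have := hle a ha
    have := hspan a ha
    simp only [label, Finset.mem_insert, Finset.mem_singleton]
    split_ifs <;> omega
  have hlabel : Set.InjOn label A := by
    intro a ha b hb hab
    have hga := hle a ha
    have hgb := hle b hb
    by_cases hsa : short a <;> by_cases hsb : short b <;>
      simp only [label, hsa, hsb, if_true, if_false] at hab
    · exact hinj a ha b hb (by simp [hsa, hsb]) hab
    · have := hlt a ha b hb hsa hsb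
      omega
    · have := hlt b hb a ha hsb hsa
      omega
    · exact hinj a ha b hb (by simp [hsa, hsb]) (by omega)
  exact (Finset.card_le_card_of_injOn label hmaps hlabel).trans Finset.card_le_two

end Counting

section AdjSwap

/-- The involution of `{0, …, M - 1}` swapping `j` and `j + 1` whenever `j + e` is even and
`j + 1 < M`; the unpaired end points are fixed. -/
def adjSwap (M e j : ℕ) : ℕ :=
  if (j + e) % 2 = 0 then min (j + 1) (M - 1) else j - 1

variable {m M e j : ℕ}

theorem adjSwap_lt (hj : j < M) : adjSwap M e j < M := by
  unfold adjSwap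
  split_ifs <;> omega

theorem adjSwap_adjSwap (hj : j < M) : adjSwap M e (adjSwap M e j) = j := by
  unfold adjSwap
  split_ifs <;> omega

theorem eq_adjSwap_iff {i : ℕ} (hi : i < M) (hj : j < M) :
    i = adjSwap M e j ↔ adjSwap M e i = j := by
  constructor
  · rintro rfl
    exact adjSwap_adjSwap hj
  · rintro rfl
    exact (adjSwap_adjSwap hi).symm

theorem adjSwap_succ_lt (hm : m ≤ M) (hM : M ≤ m + 1) (hj : j < m) :
    adjSwap M (M + 1) j < m := by
  unfold adjSwap
  split_ifs <;> omega

end AdjSwap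

section HubCenter

/-- The center to which a vertex `x` is joined. The vertices below `n * m` are the left leaves, the
next `m + M` are the centers, which are mapped to themselves, and the remaining ones are the right
leaves. Leaves of the `j`-th batch of a side go to the center `adjSwap M _ j` places inside the hub,
counted from the end of the hub on that side. -/
def hubCenter (n m M x : ℕ) : ℕ :=
  if x < n * m then n * m + adjSwap M (M + 1) ((n * m - 1 - x) / n)
  else if x < n * m + (m + M) then x
  else n * m + (m + M) - 1 - adjSwap M M ((x - (n * m + (m + M))) / n)

variable {n m M K x y p : ℕ}

theorem hubCenter_left (hy : y < n * m) :
    hubCenter n m M (n * m - 1 - y) = n * m + adjSwap M (M + 1) (y / n) := by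
  rw [hubCenter, if_pos (by omega), show n * m - 1 - (n * m - 1 - y) = y by omega]

theorem hubCenter_right :
    hubCenter n m M (n * m + (m + M) + y) = n * m + (m + M) - 1 - adjSwap M M (y / n) := by
  rw [hubCenter, if_neg (by omega), if_neg (by omega), Nat.add_sub_cancel_left]

theorem hubCenter_of_mem_hub (h₁ : n * m ≤ x) (h₂ : x < n * m + (m + M)) :
    hubCenter n m M x = x := by
  rw [hubCenter, if_neg (by omega), if_pos h₂]

theorem left_or_hub_or_right {a b K x : ℕ} (hx : x < a + b + K) :
    (∃ y < a, x = a - 1 - y) ∨ (a ≤ x ∧ x < a + b) ∨ ∃ y < K, x = a + b + y := by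
  by_cases ha : x < a
  · exact .inl ⟨a - 1 - x, by omega, by omega⟩
  by_cases hb : x < a + b
  · exact .inr (.inl ⟨by omega, hb⟩)
  · exact .inr (.inr ⟨x - (a + b), by omega, by omega⟩)

theorem hubCenter_mem_hub (hm : m ≤ M) (hM : M ≤ m + 1) (hK : K ≤ n * M)
    (hx : x < n * m + (m + M) + K) :
    n * m ≤ hubCenter n m M x ∧ hubCenter n m M x < n * m + (m + M) := by
  obtain ⟨y, hy, rfl⟩ | ⟨h₁, h₂⟩ | ⟨y, hy, rfl⟩ := left_or_hub_or_right hx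
  · have := adjSwap_succ_lt hm hM (Nat.div_lt_of_lt_mul hy)
    rw [hubCenter_left hy]
    omega
  · rw [hubCenter_of_mem_hub h₁ h₂]
    exact ⟨h₁, h₂⟩
  · have := adjSwap_lt (e := M) (Nat.div_lt_of_lt_mul (hy.trans_le hK))
    rw [hubCenter_right]
    omega

end HubCenter

theorem pairSpan_mk {g : ℕ} (u v : Fin g) : pairSpan g s(u, v) = (u : ℕ).dist v :=
  Nat.dist_eq_max_sub_min.symm

section Spans

/-- The span of the short edge at a leaf of depth `y`, which leads to a center of depth
`y / n - 1`, or `0` in the first batch. -/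
def shortSpan (n y : ℕ) : ℕ := y + 1 + (y / n - 1)

/-- The span of the long edge at a leaf of depth `y`, which leads to a center of depth
`y / n + 1`, or `M - 1` in the last batch. -/
def longSpan (n M y : ℕ) : ℕ := y + 1 + min (y / n + 1) (M - 1)

/-- The leaf of depth `y` lying on a short edge: the side alternates from batch to batch. -/
def shortLeaf (n m M y : ℕ) : ℕ :=
  if (y / n + M) % 2 = 0 then n * m - 1 - y else n * m + (m + M) + y

/-- The leaf of depth `y` lying on a long edge. -/
def longLeaf (n m M y : ℕ) : ℕ :=
  if (y / n + M) % 2 = 0 then n * m + (m + M) + y else n * m - 1 - y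

variable {n m M K x y j r d : ℕ}

theorem shortSpan_strictMono (n : ℕ) : StrictMono (shortSpan n) := by
  intro y z hyz
  have := Nat.div_le_div_right (c := n) hyz.le
  unfold shortSpan
  omega

theorem longSpan_strictMono (n M : ℕ) : StrictMono (longSpan n M) := by
  intro y z hyz
  have := Nat.div_le_div_right (c := n) hyz.le
  unfold longSpan
  omega

theorem shortSpan_mul_add (hr : r < n) : shortSpan n (n * j + r) = n * j + r + 1 + (j - 1) := by
  rw [shortSpan, Nat.mul_add_div (by omega), Nat.div_eq_of_lt hr, add_zero]

theorem longSpan_mul_add (hr : r < n) :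
    longSpan n M (n * j + r) = n * j + r + 1 + min (j + 1) (M - 1) := by
  rw [longSpan, Nat.mul_add_div (by omega), Nat.div_eq_of_lt hr, add_zero]

theorem shortSpan_add_longSpan_lt {z : ℕ} (hM : M ≤ m + 1) (hK : K ≤ n * M) (hy : y < K)
    (hz : z < n * m) : shortSpan n y + longSpan n M z < n * m + (m + M) + K := by
  have : y / n < M := Nat.div_lt_of_lt_mul (hy.trans_le hK)
  unfold shortSpan longSpan
  generalize y / n = j, z / n = i at *
  omega

theorem lt_mul_pred_of_even (hy : y < n * M) (he : (y / n + M) % 2 = 0) : y < n * (M - 1) := by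
  have : y / n < M := Nat.div_lt_of_lt_mul hy
  have hn : 0 < n := Nat.pos_of_mul_pos_right (by omega : 0 < n * M)
  rw [mul_comm, ← Nat.div_lt_iff_lt_mul hn]
  omega

theorem dist_hubCenter_left (hy : y < n * m) :
    (hubCenter n m M (n * m - 1 - y)).dist (n * m - 1 - y) =
      y + 1 + adjSwap M (M + 1) (y / n) := by
  rw [hubCenter_left hy, Nat.dist]
  omega

theorem dist_hubCenter_right (hy : y < n * M) :
    (hubCenter n m M (n * m + (m + M) + y)).dist (n * m + (m + M) + y) =
      y + 1 + adjSwap M M (y / n) := by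
  have := adjSwap_lt (e := M) (Nat.div_lt_of_lt_mul hy)
  rw [hubCenter_right, Nat.dist]
  omega

theorem dist_hubCenter_shortLeaf (hM : M ≤ m + 1) (hy : y < n * M) :
    (hubCenter n m M (shortLeaf n m M y)).dist (shortLeaf n m M y) = shortSpan n y := by
  unfold shortLeaf shortSpan
  split_ifs with he
  · have hym : y < n * m :=
      (lt_mul_pred_of_even hy he).trans_le (Nat.mul_le_mul_left n (by omega))
    rw [dist_hubCenter_left hym, adjSwap, if_neg (by omega)]
  · rw [dist_hubCenter_right hy, adjSwap, if_neg he]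

theorem dist_hubCenter_longLeaf (hm : m ≤ M) (hy : y < n * m) :
    (hubCenter n m M (longLeaf n m M y)).dist (longLeaf n m M y) = longSpan n M y := by
  unfold longLeaf longSpan
  split_ifs with he
  · rw [dist_hubCenter_right (hy.trans_le (Nat.mul_le_mul_left n hm)), adjSwap, if_pos he]
  · rw [dist_hubCenter_left hy, adjSwap, if_pos (by omega)]

theorem shortLeaf_lt (hy : y < K) : shortLeaf n m M y < n * m + (m + M) + K := by
  unfold shortLeaf
  split_ifs <;> omega

theorem longLeaf_lt (hm : m ≤ M) (hK : n * (M - 1) ≤ K) (hy : y < n * m) :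
    longLeaf n m M y < n * m + (m + M) + K := by
  unfold longLeaf
  split_ifs with he
  · have := lt_mul_pred_of_even (hy.trans_le (Nat.mul_le_mul_left n hm)) he
    omega
  · omega

theorem exists_eq_shortLeaf_or_longLeaf (hm : m ≤ M) (hM : M ≤ m + 1) (hK : n * (M - 1) ≤ K)
    (hK' : K ≤ n * M) (hx : x < n * m + (m + M) + K) (hne : hubCenter n m M x ≠ x) :
    (∃ y < K, x = shortLeaf n m M y) ∨ ∃ y < n * m, x = longLeaf n m M y := by
  unfold shortLeaf longLeaf
  obtain ⟨y, hy, rfl⟩ | ⟨h₁, h₂⟩ | ⟨y, hy, rfl⟩ := left_or_hub_or_right hx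
  · by_cases he : (y / n + M) % 2 = 0
    · have := lt_mul_pred_of_even (hy.trans_le (Nat.mul_le_mul_left n hm)) he
      exact .inl ⟨y, by omega, (if_pos he).symm⟩
    · exact .inr ⟨y, hy, (if_neg he).symm⟩
  · exact absurd (hubCenter_of_mem_hub h₁ h₂) hne
  · by_cases he : (y / n + M) % 2 = 0
    · have := lt_mul_pred_of_even (hy.trans_le hK') he
      exact .inr ⟨y, this.trans_le (Nat.mul_le_mul_left n (by omega)), (if_pos he).symm⟩
    · exact .inl ⟨y, hy, (if_neg he).symm⟩

theorem exists_shortSpan_eq_or_longSpan_eq (hn : 1 < n) (hm : m ≤ M) (hM : M ≤ m + 1)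
    (hK : n * (M - 1) ≤ K) (hK' : K ≤ n * M) (hd : 1 ≤ d)
    (hdg : 2 * d < n * m + (m + M) + K) :
    (∃ y < K, shortSpan n y = d) ∨ ∃ y < n * m, longSpan n M y = d := by
  obtain ⟨j, r, hr, rfl⟩ : ∃ j r, r < n + 1 ∧ d = n * j + j + r + 1 := by
    refine ⟨(d - 1) / (n + 1), (d - 1) % (n + 1), Nat.mod_lt _ (by omega), ?_⟩
    have := Nat.div_add_mod (d - 1) (n + 1)
    rw [add_mul, one_mul] at this
    omega
  have short (hr : r + 1 < n) (hy : n * j + r + 1 < K) :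
      ∃ y < K, shortSpan n y = n * j + j + r + 1 := by
    rcases Nat.eq_zero_or_pos j with rfl | hj
    · exact ⟨n * 0 + r, by omega, by rw [shortSpan_mul_add (by omega)]; omega⟩
    · exact ⟨n * j + (r + 1), hy, by rw [shortSpan_mul_add hr]; omega⟩
  rcases lt_trichotomy (j + 1) M with hj | rfl | hj
  · have hjK : n * (j + 1) ≤ n * (M - 1) := Nat.mul_le_mul_left n (by omega)
    have hMm : n * (M - 1) ≤ n * m := Nat.mul_le_mul_left n (by omega)
    rw [mul_add_one] at hjK
    rcases Nat.eq_zero_or_pos r with rfl | hr₀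
    · exact .inl (short hn (by omega))
    · refine .inr ⟨n * j + (r - 1), by omega, ?_⟩
      rw [longSpan_mul_add (by omega)]
      omega
  · rw [mul_add_one n] at hK'
    obtain rfl | rfl : m = j ∨ m = j + 1 := by omega
    · exact .inl (short (by omega) (by omega))
    · rw [mul_add_one n] at hdg ⊢
      refine .inr ⟨n * j + r, by omega, ?_⟩
      rw [longSpan_mul_add (by omega)]
      omega
  · have hmM : n * m ≤ n * M := Nat.mul_le_mul_left n hm
    have hMj : n * M ≤ n * j := Nat.mul_le_mul_left n (by omega)
    omega

end Spans

section LeafCount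

variable {n m M K x p : ℕ}

theorem ne_and_hubCenter_eq_left_iff (hm : m ≤ M) (hK : K ≤ n * M) (hp : p < m)
    (hx : x < n * m + (m + M) + K) :
    x ≠ n * m + p ∧ hubCenter n m M x = n * m + p ↔
      ∃ y < n * m, y / n = adjSwap M (M + 1) p ∧ n * m - 1 - y = x := by
  constructor
  · rintro ⟨hne, hcx⟩
    obtain ⟨y, hy, rfl⟩ | ⟨h₁, h₂⟩ | ⟨y, hy, rfl⟩ := left_or_hub_or_right hx
    · rw [hubCenter_left hy, Nat.add_left_cancel_iff] at hcx
      rw [← hcx, adjSwap_adjSwap ((Nat.div_lt_of_lt_mul hy).trans_le hm)]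
      exact ⟨y, hy, rfl, rfl⟩
    · exact absurd (hubCenter_of_mem_hub h₁ h₂ ▸ hcx) hne
    · have := adjSwap_lt (e := M) (Nat.div_lt_of_lt_mul (hy.trans_le hK))
      rw [hubCenter_right] at hcx
      omega
  · rintro ⟨y, hy, hyp, rfl⟩
    rw [hubCenter_left hy, hyp, adjSwap_adjSwap (hp.trans_le hm)]
    exact ⟨by omega, rfl⟩

theorem ne_and_hubCenter_eq_right_iff (hm : m ≤ M) (hM : M ≤ m + 1) (hK : K ≤ n * M) (hp : p < M)
    (hx : x < n * m + (m + M) + K) :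
    x ≠ n * m + (m + M) - 1 - p ∧ hubCenter n m M x = n * m + (m + M) - 1 - p ↔
      ∃ y < K, y / n = adjSwap M M p ∧ n * m + (m + M) + y = x := by
  constructor
  · rintro ⟨hne, hcx⟩
    obtain ⟨y, hy, rfl⟩ | ⟨h₁, h₂⟩ | ⟨y, hy, rfl⟩ := left_or_hub_or_right hx
    · have := adjSwap_succ_lt hm hM (Nat.div_lt_of_lt_mul hy)
      rw [hubCenter_left hy] at hcx
      omega
    · exact absurd (hubCenter_of_mem_hub h₁ h₂ ▸ hcx) hne
    · have hyM := Nat.div_lt_of_lt_mul (hy.trans_le hK)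
      have hsM := adjSwap_lt (e := M) hyM
      rw [hubCenter_right] at hcx
      obtain rfl : adjSwap M M (y / n) = p := by omega
      exact ⟨y, hy, (adjSwap_adjSwap hyM).symm, rfl⟩
  · rintro ⟨y, -, hyp, rfl⟩
    rw [hubCenter_right, hyp, adjSwap_adjSwap hp]
    exact ⟨by omega, rfl⟩

end LeafCount

section HubFactor

variable {n m M K : ℕ} {F : Fin (n * m + (m + M) + K) → Fin (n * m + (m + M) + K)}

theorem hubCenter_idempotent (hm : m ≤ M) (hM : M ≤ m + 1) (hK : K ≤ n * M)
    (hF : ∀ x, (F x : ℕ) = hubCenter n m M x) (x) : F (F x) = F x := by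
  obtain ⟨h₁, h₂⟩ := hubCenter_mem_hub hm hM hK x.isLt
  rw [Fin.ext_iff, hF, hF, hubCenter_of_mem_hub h₁ h₂]

theorem card_fiberStar_left (hm : m ≤ M) (hM : M ≤ m + 1) (hK : K ≤ n * M) (hn : 0 < n)
    (hF : ∀ x, (F x : ℕ) = hubCenter n m M x) {c : Fin (n * m + (m + M) + K)} {p : ℕ}
    (hp : p < m) (hc : (c : ℕ) = n * m + p) : (fiberStar F c).2.card = n := by
  have hfull : n * (adjSwap M (M + 1) p + 1) ≤ n * m :=
    Nat.mul_le_mul_left n (adjSwap_succ_lt hm hM hp)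
  rw [card_fiberStar_eq_card
      (s := (Finset.range (n * m)).filter fun y => y / n = adjSwap M (M + 1) p)
      (f := fun y => n * m - 1 - y),
    card_filter_range_div_eq hn, mul_comm _ n]
  · rw [mul_add_one] at hfull
    omega
  · intro y hy z hz hyz
    simp only [Finset.mem_coe, Finset.mem_filter, Finset.mem_range] at hy hz hyz
    omega
  · intro y hy
    rw [Finset.mem_filter, Finset.mem_range] at hy
    omega
  · intro x
    simp only [ne_eq, Fin.ext_iff, hF, hc, Finset.mem_filter, Finset.mem_range, and_assoc]
    exact ne_and_hubCenter_eq_left_iff hm hK hp x.isLt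

theorem card_fiberStar_right (hm : m ≤ M) (hM : M ≤ m + 1) (hK : n * (M - 1) ≤ K)
    (hK' : K ≤ n * M) (hn : 0 < n) (hF : ∀ x, (F x : ℕ) = hubCenter n m M x)
    {c : Fin (n * m + (m + M) + K)} {p : ℕ} (hp : p < M)
    (hc : (c : ℕ) = n * m + (m + M) - 1 - p) :
    (fiberStar F c).2.card = if p = adjSwap M M (M - 1) then K - n * (M - 1) else n := by
  rw [card_fiberStar_eq_card (s := (Finset.range K).filter fun y => y / n = adjSwap M M p)
      (f := fun y => n * m + (m + M) + y) (add_right_injective _).injOn,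
    card_filter_range_div_eq hn, mul_comm _ n]
  · simp only [eq_adjSwap_iff hp (show M - 1 < M by omega)]
    split_ifs with hlast
    · have hM₁ : n * M = n * (M - 1) + n := by rw [← mul_add_one, Nat.sub_add_cancel (by omega)]
      rw [hlast]
      omega
    · have hq := adjSwap_lt (e := M) hp
      have hfull : n * (adjSwap M M p + 1) ≤ n * (M - 1) := Nat.mul_le_mul_left n (by omega)
      rw [mul_add_one] at hfull
      omega
  · intro y hy
    rw [Finset.mem_filter, Finset.mem_range] at hy
    omega
  · intro x
    simp only [ne_eq, Fin.ext_iff, hF, hc, Finset.mem_filter, Finset.mem_range, and_assoc]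
    exact ne_and_hubCenter_eq_right_iff hm hM hK' hp x.isLt

/-- Only the star whose leaves form the last batch on the right may be little. -/
theorem card_fiberStar_hub (hm : m ≤ M) (hM : M ≤ m + 1) (hK : n * (M - 1) ≤ K) (hK' : K ≤ n * M)
    (hn : 0 < n) (hF : ∀ x, (F x : ℕ) = hubCenter n m M x) {c : Fin (n * m + (m + M) + K)}
    (h₁ : n * m ≤ c) (h₂ : c < n * m + (m + M)) :
    (fiberStar F c).2.card =
      if (c : ℕ) = n * m + (m + M) - 1 - adjSwap M M (M - 1) then K - n * (M - 1) else n := by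
  have hlast : 0 < M → adjSwap M M (M - 1) < M := fun _ => adjSwap_lt (by omega)
  by_cases hleft : (c : ℕ) < n * m + m
  · rw [if_neg (by omega)]
    exact card_fiberStar_left hm hM hK' hn hF (p := c - n * m) (by omega) (by omega)
  · rw [card_fiberStar_right hm hM hK hK' hn hF (p := n * m + (m + M) - 1 - c) (by omega)
      (by omega)]
    congr 1
    rw [eq_iff_iff]
    omega

theorem isAlmostStarFactor_fiberStars (hm : m ≤ M) (hM : M ≤ m + 1) (hK : n * (M - 1) ≤ K)
    (hK' : K ≤ n * M) (hn : 0 < n) (hF : ∀ x, (F x : ℕ) = hubCenter n m M x) {t : ℕ}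
    (hfull : t = 0 → K = n * M) (hlittle : t ≠ 0 → 0 < M ∧ K = n * (M - 1) + (t - 1)) :
    IsAlmostStarFactor n (n * m + (m + M) + K) t (fiberStars F) := by
  have hhub (x) : n * m ≤ F x ∧ F x < n * m + (m + M) := by
    rw [hF]
    exact hubCenter_mem_hub hm hM hK' x.isLt
  have hcard (x) := card_fiberStar_hub hm hM hK hK' hn hF (hhub x).1 (hhub x).2
  refine ⟨fun p => fst_notMem_snd_of_mem_fiberStars,
    existsUnique_mem_fiberStars (hubCenter_idempotent hm hM hK' hF), ?_⟩
  split_ifs with ht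
  · intro p hp
    obtain ⟨x, rfl⟩ := mem_fiberStars.1 hp
    have hM₁ : n * (M - 1) + n = n * M := by
      have := hhub x
      rw [← mul_add_one, Nat.sub_add_cancel (by omega)]
    have hKM := hfull ht
    rw [hcard]
    split_ifs <;> omega
  · obtain ⟨hM₀, rfl⟩ := hlittle ht
    have hq := adjSwap_lt (e := M) (Nat.sub_one_lt_of_lt hM₀)
    let c : Fin (n * m + (m + M) + (n * (M - 1) + (t - 1))) :=
      ⟨n * m + (m + M) - 1 - adjSwap M M (M - 1), by omega⟩
    have hc : F c = c := Fin.ext <| by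
      rw [hF]
      exact hubCenter_of_mem_hub (by simp only [c]; omega) (by simp only [c]; omega)
    refine ⟨fiberStar F c, mem_fiberStars.2 ⟨c, by rw [hc]⟩, ?_, ?_⟩
    · rw [← hc, hcard, hc, if_pos rfl, Nat.add_sub_cancel_left]
    · intro p hp hne
      obtain ⟨x, rfl⟩ := mem_fiberStars.1 hp
      rw [hcard, if_neg]
      exact fun h => hne (congrArg (fiberStar F) (Fin.ext h : F x = c))

theorem exists_isForwardEdge_of_pairDiff (hn : 1 < n) (hm : m ≤ M) (hM : M ≤ m + 1)
    (hK : n * (M - 1) ≤ K) (hK' : K ≤ n * M) (hF : ∀ x, (F x : ℕ) = hubCenter n m M x) {d : ℕ}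
    (hd : 1 ≤ d) (hdg : 2 * d < n * m + (m + M) + K) :
    ∃ e ∈ factorEdges _ (fiberStars F), pairDiff _ e = d ∧ IsForwardEdge _ e := by
  obtain ⟨x, hx⟩ : ∃ x : Fin (n * m + (m + M) + K), (hubCenter n m M x).dist x = d := by
    obtain ⟨y, hy, rfl⟩ | ⟨y, hy, rfl⟩ :=
      exists_shortSpan_eq_or_longSpan_eq hn hm hM hK hK' hd hdg
    · exact ⟨⟨_, shortLeaf_lt hy⟩, dist_hubCenter_shortLeaf hM (hy.trans_le hK')⟩
    · exact ⟨⟨_, longLeaf_lt hm hK hy⟩, dist_hubCenter_longLeaf hm hy⟩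
  have hspan : pairSpan _ s(F x, x) = d := by rw [pairSpan_mk, hF, hx]
  have hdiff : pairDiff _ s(F x, x) = d := by
    rw [pairDiff, hspan]
    omega
  have hne : F x ≠ x := by
    intro h
    rw [← hF, h, Nat.dist_self] at hx
    omega
  exact ⟨_, mem_biUnion_starEdgeSet_fiberStars.2 ⟨x, hne, rfl⟩, hdiff, hdiff.trans hspan.symm⟩

theorem card_filter_pairDiff_le_two (hm : m ≤ M) (hM : M ≤ m + 1) (hK : n * (M - 1) ≤ K)
    (hK' : K ≤ n * M) (hF : ∀ x, (F x : ℕ) = hubCenter n m M x) (d : ℕ) :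
    ((factorEdges _ (fiberStars F)).filter fun e => pairDiff _ e = d).card ≤ 2 := by
  let A : Finset (Fin (n * m + (m + M) + K)) :=
    Finset.univ.filter fun x => F x ≠ x ∧ pairDiff _ s(F x, x) = d
  let short (x : Fin (n * m + (m + M) + K)) : Prop := ∃ y < K, (x : ℕ) = shortLeaf n m M y
  have hlong {x} (hx : x ∈ A) (hs : ¬ short x) : ∃ y < n * m, (x : ℕ) = longLeaf n m M y := by
    refine (exists_eq_shortLeaf_or_longLeaf hm hM hK hK' x.isLt ?_).resolve_left hs
    rw [← hF, ne_eq, ← Fin.ext_iff]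
    exact (Finset.mem_filter.1 hx).2.1
  refine (card_filter_factorEdges_fiberStars_le F _).trans <|
    card_le_two_of_add_lt (span := fun x => pairSpan _ s(F x, x)) (short := short)
      (g := n * m + (m + M) + K) (d := d) ?_ ?_ ?_ ?_
  · intro x _
    rw [pairSpan_mk, Nat.dist]
    omega
  · intro x hx
    exact (Finset.mem_filter.1 hx).2.2
  · intro x hx x' hx' hiff hspan
    simp only [pairSpan_mk, hF] at hspan
    by_cases hs : short x
    · obtain ⟨y, hy, hxy⟩ := hs
      obtain ⟨y', hy', hxy'⟩ := hiff.1 ⟨y, hy, hxy⟩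
      rw [hxy, hxy', dist_hubCenter_shortLeaf hM (hy.trans_le hK'),
        dist_hubCenter_shortLeaf hM (hy'.trans_le hK')] at hspan
      rw [Fin.ext_iff, hxy, hxy', (shortSpan_strictMono n).injective hspan]
    · obtain ⟨y, hy, hxy⟩ := hlong hx hs
      obtain ⟨y', hy', hxy'⟩ := hlong hx' (mt hiff.2 hs)
      rw [hxy, hxy', dist_hubCenter_longLeaf hm hy, dist_hubCenter_longLeaf hm hy'] at hspan
      rw [Fin.ext_iff, hxy, hxy', (longSpan_strictMono n M).injective hspan]
  · rintro x - x' hx' ⟨y, hy, hxy⟩ hs'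
    obtain ⟨z, hz, hxz⟩ := hlong hx' hs'
    simp only [pairSpan_mk, hF]
    rw [hxy, hxz, dist_hubCenter_shortLeaf hM (hy.trans_le hK'), dist_hubCenter_longLeaf hm hz]
    exact shortSpan_add_longSpan_lt hM hK' hy hz

end HubFactor

theorem exists_hub_parameters {n g t : ℕ} (ht : t ≤ n) (htg : t ≡ g [MOD n + 1]) :
    ∃ m M K, m ≤ M ∧ M ≤ m + 1 ∧ n * (M - 1) ≤ K ∧ K ≤ n * M ∧ g = n * m + (m + M) + K ∧
      (t = 0 → K = n * M) ∧ (t ≠ 0 → 0 < M ∧ K = n * (M - 1) + (t - 1)) := by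
  obtain ⟨w, rfl⟩ : ∃ w, g = (n + 1) * w + t := by
    refine ⟨g / (n + 1), ?_⟩
    have htg : t % (n + 1) = g % (n + 1) := htg
    rw [← Nat.mod_eq_of_lt (Nat.lt_succ_of_le ht), htg, Nat.div_add_mod]
  rcases Nat.eq_zero_or_pos t with rfl | ht₀
  · obtain ⟨m, M, rfl, hm, hM⟩ : ∃ m M, w = m + M ∧ m ≤ M ∧ M ≤ m + 1 :=
      ⟨w / 2, w - w / 2, by omega, by omega, by omega⟩
    refine ⟨m, M, n * M, hm, hM, Nat.mul_le_mul_left n (Nat.sub_le M 1), le_rfl, by ring, ?_⟩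
    exact ⟨fun _ => rfl, fun h => absurd rfl h⟩
  · obtain ⟨m, M, rfl, hm, hM⟩ : ∃ m M, w = m + M ∧ m ≤ M + 1 ∧ M ≤ m :=
      ⟨w - w / 2, w / 2, by omega, by omega, by omega⟩
    refine ⟨m, M + 1, n * M + (t - 1), hm, by omega, Nat.le_add_right _ _, ?_, ?_, ?_⟩
    · rw [mul_add_one]
      omega
    · rw [show (n + 1) * (m + M) = n * m + n * M + m + M by ring]
      omega
    · exact ⟨fun h => absurd h ht₀.ne', fun _ => ⟨M.succ_pos, rfl⟩⟩

theorem almost_factor_even_large_k_general {n : ℕ} (hn : 1 < n) {g t : ℕ} (ht : t ≤ n)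
    (htg : t ≡ g [MOD n + 1]) :
    ∃ P : Finset (Fin g × Finset (Fin g)),
      IsAlmostStarFactor n g t P ∧
      (∀ d, 1 ≤ d → 2 * d < g →
        ∃ e ∈ factorEdges g P, pairDiff g e = d ∧ IsForwardEdge g e) ∧
      ∀ d, ((factorEdges g P).filter fun e => pairDiff g e = d).card ≤ 2 := by
  obtain ⟨m, M, K, hm, hM, hK, hK', rfl, hfull, hlittle⟩ := exists_hub_parameters ht htg
  have hlt (x : Fin (n * m + (m + M) + K)) : hubCenter n m M x < n * m + (m + M) + K :=
    (hubCenter_mem_hub hm hM hK' x.isLt).2.trans_le (Nat.le_add_right _ _)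
  let F (x : Fin (n * m + (m + M) + K)) : Fin (n * m + (m + M) + K) :=
    ⟨hubCenter n m M x, hlt x⟩
  have hF (x) : (F x : ℕ) = hubCenter n m M x := rfl
  exact ⟨fiberStars F,
    isAlmostStarFactor_fiberStars hm hM hK hK' (by omega) hF hfull hlittle,
    fun d hd hdg => exists_isForwardEdge_of_pairDiff hn hm hM hK hK' hF hd hdg,
    card_filter_pairDiff_le_two hm hM hK hK' hF⟩

/-- Lemma 7 (k ≥ 2, even case): for odd `n > 1` and `g = 2nk + 2` with `k ≥ 2`, there
is an almost `n`-star factor on `Z_g` whose little star has `t-1` leaves (no little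
star when `t = 0`), such that every difference `d ∈ {1, …, nk}` is realized at least
once by a forward edge and at most twice overall. -/
theorem almost_factor_even_large_k (n : ℕ) (hn : 1 < n) (hodd : Odd n)
    (k : ℕ) (hk : 2 ≤ k) (g : ℕ) (hg : g = 2 * n * k + 2)
    (t : ℕ) (ht1 : t ≤ n) (ht2 : t ≡ g [MOD n + 1]) :
    ∃ P : Finset (Fin g × Finset (Fin g)),
      IsAlmostStarFactor n g t P ∧
      (∀ d, 1 ≤ d → d ≤ n * k →
        ∃ e ∈ factorEdges g P, pairDiff g e = d ∧ IsForwardEdge g e) ∧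
      (∀ d, 1 ≤ d → d ≤ n * k →
        ((factorEdges g P).filter (fun e => pairDiff g e = d)).card ≤ 2)  := by
  obtain ⟨P, hP, hforward, htwo⟩ := almost_factor_even_large_k_general hn ht1 ht2
  have hdg (d) (hd : d ≤ n * k) : 2 * d < g := by linarith
  exact ⟨P, hP, fun d hd hdk => hforward d hd (hdg d hdk), fun d _ _ => htwo d⟩
end
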